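/- arXiv:1908.11172 — 5 statements merged into one kernel-verified Lean document; each statement's English description precedes it below -/
import Mathlib

section
/- Let d ≥ 2 and let γ : ℝ → ℝ^d be a closed curve of length L parametrized by arc length whose derivative γ' is Lipschitz, and set K := ‖γ''‖_{L^∞}. Then for all real numbers s ≤ t, 0 ≤ (t−s)² − |γ(t) − γ(s)|² ≤ (K²/2)(t−s)⁴. -/
open MeasureTheory Real Filter
open scoped Classical ENNReal NNReal

/-- intrinsic distance of parameters on the circle of length `L`. -/
noncomputable def iDist (L s t : ℝ) : ℝ := ⨅ k : ℤ, |t - s - (k : ℝ) * L|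

/-- O'Hara's `(α,q)`-energy of a closed curve `γ` of length `L`. -/
noncomputable def oharaE (d : ℕ) (α q L : ℝ) (γ : ℝ → EuclideanSpace ℝ (Fin d)) : ℝ :=
  (1 / α) * L ^ (α * q - 2) *
    ∫ t in Set.Ioc (0 : ℝ) L, ∫ s in Set.Ioc (0 : ℝ) L,
      (‖γ t - γ s‖ ^ (-α) - iDist L s t ^ (-α)) ^ q

/-- length of the `k`-th edge of the inscribed polygon with vertices `γ (b k)`. -/
noncomputable def edgeLen (d : ℕ) (γ : ℝ → EuclideanSpace ℝ (Fin d)) (b : ℤ → ℝ) (k : ℤ) : ℝ :=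
  ‖γ (b (k + 1)) - γ (b k)‖

/-- total length of the inscribed polygon with `n` edges. -/
noncomputable def polyLen (d : ℕ) (γ : ℝ → EuclideanSpace ℝ (Fin d)) (b : ℤ → ℝ) (n : ℕ) : ℝ :=
  ∑ k ∈ Finset.Icc (1 : ℤ) (n : ℤ), edgeLen d γ b k

/-- arc-length parameter `a i` of the `i`-th vertex of the inscribed polygon (`a 1 = 0`). -/
noncomputable def vParam (d : ℕ) (γ : ℝ → EuclideanSpace ℝ (Fin d)) (b : ℤ → ℝ) (i : ℤ) : ℝ :=
  ∑ k ∈ Finset.Ico (1 : ℤ) i, edgeLen d γ b k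

/-- discrete O'Hara energy of the inscribed polygon with vertices `γ (b k)`, `k = 1, …, n`. -/
noncomputable def discE (d : ℕ) (α q : ℝ) (γ : ℝ → EuclideanSpace ℝ (Fin d)) (b : ℤ → ℝ)
    (n : ℕ) : ℝ :=
  (1 / α) * polyLen d γ b n ^ (α * q - 2) *
    ∑ i ∈ Finset.Icc (1 : ℤ) (n : ℤ), ∑ j ∈ Finset.Icc (1 : ℤ) (n : ℤ),
      (if i = j then 0 else
        (‖γ (b j) - γ (b i)‖ ^ (-α) -
            iDist (polyLen d γ b n) (vParam d γ b i) (vParam d γ b j) ^ (-α)) ^ q *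
          edgeLen d γ b i * edgeLen d γ b j)

/-- a `(c, cb)`-division of the closed curve `γ` of length `L` into `n` arcs. -/
def IsDivision (d : ℕ) (γ : ℝ → EuclideanSpace ℝ (Fin d)) (L c cb : ℝ) (n : ℕ)
    (b : ℤ → ℝ) : Prop :=
  StrictMono b ∧ (∀ k : ℤ, b (k + (n : ℤ)) = b k + L) ∧
    ∀ k : ℤ, c * L / n ≤ edgeLen d γ b k ∧ edgeLen d γ b k ≤ cb * L / n

/-!
For a unit-speed curve, `⟪γ' u, γ' t⟫ = 1 - ‖γ' u - γ' t‖² / 2 ≥ 1 - K² (t - u)² / 2`. Integrating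
in `u` over `[s, t]` gives `⟪γ t - γ s, γ' t⟫ ≥ (t - s) - K² (t - s)³ / 6`. The left-hand side is
half the derivative of `‖γ t - γ s‖²` in `t`, so a second integration yields the upper bound, with
the sharper constant `K² / 12`. The lower bound says that a chord is no longer than its arc.
-/

theorem sub_le_sub_of_hasDerivAt_le {f g f' g' : ℝ → ℝ} {a b : ℝ} (hab : a ≤ b)
    (hf : ∀ x ∈ Set.Icc a b, HasDerivAt f (f' x) x)
    (hg : ∀ x ∈ Set.Icc a b, HasDerivAt g (g' x) x)
    (hle : ∀ x ∈ Set.Ioo a b, f' x ≤ g' x) :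
    f b - f a ≤ g b - g a := by
  have hderiv : ∀ x ∈ Set.Icc a b, HasDerivAt (g - f) (g' x - f' x) x :=
    fun x hx ↦ (hg x hx).sub (hf x hx)
  have hmono : MonotoneOn (g - f) (Set.Icc a b) := by
    refine monotoneOn_of_hasDerivWithinAt_nonneg (convex_Icc a b)
      (fun x hx ↦ (hderiv x hx).continuousAt.continuousWithinAt)
      (fun x hx ↦ (hderiv x (interior_subset hx)).hasDerivWithinAt) fun x hx ↦ ?_
    rw [interior_Icc] at hx
    exact sub_nonneg.2 (hle x hx)
  have hends : g a - f a ≤ g b - f b :=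
    hmono (Set.left_mem_Icc.2 hab) (Set.right_mem_Icc.2 hab) hab
  linarith

theorem norm_sub_le_abs_sub_of_norm_deriv_le_one {F : Type*} [NormedAddCommGroup F]
    [NormedSpace ℝ F] {γ : ℝ → F} (hdiff : Differentiable ℝ γ) (hspeed : ∀ u, ‖deriv γ u‖ ≤ 1)
    (s t : ℝ) : ‖γ t - γ s‖ ≤ |t - s| := by
  have hlip : LipschitzWith 1 γ := lipschitzWith_of_nnnorm_deriv_le hdiff hspeed
  simpa using hlip.norm_sub_le t s

section InnerProductSpace

variable {E : Type*} [NormedAddCommGroup E] [InnerProductSpace ℝ E]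

theorem one_sub_dist_sq_le_inner_of_lipschitzWith {X : Type*} [PseudoMetricSpace X] {τ : X → E}
    {K : ℝ≥0} (hunit : ∀ x, ‖τ x‖ = 1) (hK : LipschitzWith K τ) (x y : X) :
    1 - (K : ℝ) ^ 2 / 2 * dist x y ^ 2 ≤ inner ℝ (τ x) (τ y) := by
  have hsq : ‖τ x - τ y‖ ^ 2 ≤ (K * dist x y) ^ 2 := by
    rw [← dist_eq_norm]
    exact pow_le_pow_left₀ dist_nonneg (hK.dist_le_mul x y) 2
  rw [norm_sub_sq_real, hunit, hunit] at hsq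
  linarith

variable {γ : ℝ → E} {K : ℝ≥0}

theorem sub_sub_cube_le_inner_sub_deriv (hdiff : Differentiable ℝ γ)
    (hspeed : ∀ u, ‖deriv γ u‖ = 1) (hK : LipschitzWith K (deriv γ)) {s t : ℝ} (hst : s ≤ t) :
    (t - s) - (K : ℝ) ^ 2 / 6 * (t - s) ^ 3 ≤ inner ℝ (γ t - γ s) (deriv γ t) := by
  have hpoly (u : ℝ) : HasDerivAt (fun u ↦ u - (K : ℝ) ^ 2 / 6 * (u - t) ^ 3)
      (1 - (K : ℝ) ^ 2 / 2 * (u - t) ^ 2) u :=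
    ((hasDerivAt_id u).sub ((((hasDerivAt_id u).sub_const t).pow 3).const_mul _)).congr_deriv
      (by push_cast [id]; ring)
  have hinner (u : ℝ) : HasDerivAt (fun u ↦ inner ℝ (γ u) (deriv γ t))
      (inner ℝ (deriv γ u) (deriv γ t)) u := by
    simpa using (hdiff u).hasDerivAt.inner ℝ (hasDerivAt_const u (deriv γ t))
  have hint := sub_le_sub_of_hasDerivAt_le hst (fun u _ ↦ hpoly u) (fun u _ ↦ hinner u)
    fun u _ ↦ by
      simpa [Real.dist_eq] using one_sub_dist_sq_le_inner_of_lipschitzWith hspeed hK u t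
  rw [inner_sub_left]
  linarith

theorem sq_sub_pow_four_le_norm_sub_sq (hdiff : Differentiable ℝ γ)
    (hspeed : ∀ u, ‖deriv γ u‖ = 1) (hK : LipschitzWith K (deriv γ)) {s t : ℝ} (hst : s ≤ t) :
    (t - s) ^ 2 - (K : ℝ) ^ 2 / 12 * (t - s) ^ 4 ≤ ‖γ t - γ s‖ ^ 2 := by
  have hpoly (u : ℝ) : HasDerivAt (fun u ↦ (u - s) ^ 2 - (K : ℝ) ^ 2 / 12 * (u - s) ^ 4)
      (2 * ((u - s) - (K : ℝ) ^ 2 / 6 * (u - s) ^ 3)) u :=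
    have hsub := (hasDerivAt_id u).sub_const s
    ((hsub.pow 2).sub ((hsub.pow 4).const_mul _)).congr_deriv (by push_cast [id]; ring)
  have hchord (u : ℝ) : HasDerivAt (fun u ↦ ‖γ u - γ s‖ ^ 2)
      (2 * inner ℝ (γ u - γ s) (deriv γ u)) u :=
    ((hdiff u).hasDerivAt.sub_const (γ s)).norm_sq
  have hint := sub_le_sub_of_hasDerivAt_le hst (fun u _ ↦ hpoly u) (fun u _ ↦ hchord u)
    fun u hu ↦ mul_le_mul_of_nonneg_left
      (sub_sub_cube_le_inner_sub_deriv hdiff hspeed hK hu.1.le) zero_le_two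
  simpa using hint

theorem stmt3_general (hdiff : Differentiable ℝ γ) (hspeed : ∀ u, ‖deriv γ u‖ = 1)
    (hK : LipschitzWith K (deriv γ)) (s t : ℝ) :
    0 ≤ (t - s) ^ 2 - ‖γ t - γ s‖ ^ 2 ∧
      (t - s) ^ 2 - ‖γ t - γ s‖ ^ 2 ≤ (K : ℝ) ^ 2 / 12 * (t - s) ^ 4 := by
  constructor
  · rw [sub_nonneg, ← sq_abs (t - s)]
    exact pow_le_pow_left₀ (norm_nonneg _)
      (norm_sub_le_abs_sub_of_norm_deriv_le_one hdiff (fun u ↦ (hspeed u).le) s t) 2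
  · wlog hst : s ≤ t generalizing s t
    · have hswap := this t s (le_of_not_ge hst)
      rwa [norm_sub_rev, ← neg_sub t s, even_two.neg_pow, Even.neg_pow (by decide)] at hswap
    linarith [sq_sub_pow_four_le_norm_sub_sq hdiff hspeed hK hst]

end InnerProductSpace

theorem stmt3 (d : ℕ) (hd : 2 ≤ d) (L : ℝ) (hL : 0 < L)
    (γ : ℝ → EuclideanSpace ℝ (Fin d)) (K : ℝ≥0)
    (hper : Function.Periodic γ L)
    (hdiff : Differentiable ℝ γ)
    (hspeed : ∀ s : ℝ, ‖deriv γ s‖ = 1)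
    (hK : LipschitzWith K (deriv γ))
    (s t : ℝ) (hst : s ≤ t) :
    0 ≤ (t - s) ^ 2 - ‖γ t - γ s‖ ^ 2 ∧
      (t - s) ^ 2 - ‖γ t - γ s‖ ^ 2 ≤ (K : ℝ) ^ 2 / 2 * (t - s) ^ 4 := by
  obtain ⟨hlower, hupper⟩ := stmt3_general hdiff hspeed hK s t
  exact ⟨hlower, hupper.trans (by gcongr; norm_num)⟩
end

section
/- Let d ≥ 2, α ∈ (0,∞) and q ∈ [1,∞), and let γ : ℝ → ℝ^d be a closed curve of length L parametrized by arc length. Then for all real numbers s < t, (t−s) − |γ(t) − γ(s)| ≤ (1/2)(t−s)^{α+1−2/q} ( ∫_s^t ∫_s^t |γ'(v) − γ'(u)|^{2q} / |v−u|^{αq} du dv )^{1/q}, where the right-hand side may equal +∞. -/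
open MeasureTheory Real Filter
open scoped Classical ENNReal NNReal

/-!
Put `T = t - s` and `D = ‖γ t - γ s‖`. As `γ'` has unit length and integral `γ t - γ s` over
`(s, t]`, expanding the square shows that `∬ ‖γ' v - γ' u‖ ^ 2 = 2 * (T ^ 2 - D ^ 2)`, which is at
least `2 * T * (T - D)` because `D ≤ T`. Hölder's inequality on the square bounds the left side by
`T ^ (2 - 2 / q) * (∬ ‖γ' v - γ' u‖ ^ (2 * q)) ^ (1 / q)`, and inserting the weight
`1 ≤ (T / |v - u|) ^ (α * q)` costs a further factor `T ^ α`.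
-/

section AbsolutelyContinuous

variable {a b : ℝ}

theorem absolutelyContinuousOnInterval_comp_of_lipschitzWith {X Y : Type*} [PseudoMetricSpace X]
    [PseudoMetricSpace Y] {K : ℝ≥0} {g : X → Y} {f : ℝ → X} (hg : LipschitzWith K g)
    (hf : AbsolutelyContinuousOnInterval f a b) :
    AbsolutelyContinuousOnInterval (g ∘ f) a b := by
  refine squeeze_zero (fun _ ↦ Finset.sum_nonneg fun _ _ ↦ dist_nonneg) (fun I ↦ ?_)
    (by simpa using Tendsto.const_mul (K : ℝ) hf)
  rw [Finset.mul_sum]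
  exact Finset.sum_le_sum fun _ _ ↦ hg.dist_le_mul _ _

variable {E : Type*} [NormedAddCommGroup E] [NormedSpace ℝ E] [CompleteSpace E] {f : ℝ → E}

theorem intervalIntegral_deriv_eq_sub_of_ae_differentiableAt
    (hf : AbsolutelyContinuousOnInterval f a b)
    (hdiff : ∀ᵐ x ∂volume.restrict (Set.uIoc a b), DifferentiableAt ℝ f x)
    (hint : IntervalIntegrable (deriv f) volume a b) :
    ∫ x in a..b, deriv f x = f b - f a := by
  refine (SeparatingDual.eq_iff_forall_dual_eq (R := ℝ)).2 fun φ ↦ ?_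
  have hderiv : ∀ᵐ x ∂volume.restrict (Set.uIoc a b), φ (deriv f x) = deriv (φ ∘ f) x := by
    filter_upwards [hdiff] with x hx
    exact (φ.hasFDerivAt.comp_hasDerivAt x hx.hasDerivAt).deriv.symm
  calc φ (∫ x in a..b, deriv f x)
      = ∫ x in a..b, φ (deriv f x) := (φ.intervalIntegral_comp_comm hint).symm
    _ = ∫ x in a..b, deriv (φ ∘ f) x := intervalIntegral.integral_congr_ae_restrict hderiv
    _ = φ (f b) - φ (f a) :=
      (absolutelyContinuousOnInterval_comp_of_lipschitzWith φ.lipschitz hf).integral_deriv_eq_sub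
    _ = φ (f b - f a) := (map_sub φ _ _).symm

theorem setIntegral_deriv_eq_sub_of_norm_deriv_eq_one (hab : a ≤ b)
    (hf : AbsolutelyContinuousOnInterval f a b)
    (hspeed : ∀ᵐ x ∂volume.restrict (Set.Ioc a b), ‖deriv f x‖ = 1) :
    ∫ x in Set.Ioc a b, deriv f x = f b - f a := by
  have hdiff : ∀ᵐ x ∂volume.restrict (Set.uIoc a b), DifferentiableAt ℝ f x := by
    rw [Set.uIoc_of_le hab]
    filter_upwards [hspeed] with x hx
    -- `deriv` is zero wherever the derivative does not exist.
    exact differentiableAt_of_deriv_ne_zero (norm_ne_zero_iff.1 (by simp [hx]))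
  have hint : IntervalIntegrable (deriv f) volume a b :=
    (intervalIntegrable_iff_integrableOn_Ioc_of_le hab).2 <|
      Integrable.of_bound (aestronglyMeasurable_deriv _ _) 1 (hspeed.mono fun _ hx ↦ hx.le)
  rw [← intervalIntegral.integral_of_le hab,
    intervalIntegral_deriv_eq_sub_of_ae_differentiableAt hf hdiff hint]

end AbsolutelyContinuous

section FiniteMeasure

variable {Ω : Type*} [MeasurableSpace Ω] {μ : Measure Ω}

theorem lintegral_le_lintegral_rpow_mul_measure_univ_rpow {h : Ω → ℝ≥0∞} (hh : AEMeasurable h μ)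
    {q : ℝ} (hq : 1 ≤ q) :
    ∫⁻ x, h x ∂μ ≤ (∫⁻ x, h x ^ q ∂μ) ^ (1 / q) * μ Set.univ ^ (1 - 1 / q) := by
  simpa [eLpNorm'] using
    eLpNorm'_le_eLpNorm'_mul_rpow_measure_univ one_pos hq hh.aestronglyMeasurable

variable [IsFiniteMeasure μ]

theorem lintegral_lintegral_norm_sub_sq_le {E : Type*} [NormedAddCommGroup E] {f : Ω → E}
    (hf : AEStronglyMeasurable f μ) {q : ℝ} (hq : 1 ≤ q) :
    ∫⁻ x, ∫⁻ y, ENNReal.ofReal (‖f x - f y‖ ^ 2) ∂μ ∂μ ≤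
      (∫⁻ x, ∫⁻ y, ENNReal.ofReal (‖f x - f y‖ ^ (2 * q)) ∂μ ∂μ) ^ (1 / q) *
        ENNReal.ofReal (μ.real Set.univ ^ (2 - 2 / q)) := by
  have hsub : AEMeasurable (fun z : Ω × Ω ↦ ‖f z.1 - f z.2‖) (μ.prod μ) :=
    (hf.comp_fst.sub hf.comp_snd).norm.aemeasurable
  have hsq : AEMeasurable (fun z : Ω × Ω ↦ ENNReal.ofReal (‖f z.1 - f z.2‖ ^ 2)) (μ.prod μ) :=
    (hsub.pow_const 2).ennreal_ofReal
  have hpow (z : Ω × Ω) : ENNReal.ofReal (‖f z.1 - f z.2‖ ^ 2) ^ q =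
      ENNReal.ofReal (‖f z.1 - f z.2‖ ^ (2 * q)) := by
    rw [ENNReal.ofReal_rpow_of_nonneg (by positivity) (by positivity),
      Real.rpow_mul (norm_nonneg _), Real.rpow_two]
  have hmass : (μ.prod μ) Set.univ ^ (1 - 1 / q) =
      ENNReal.ofReal (μ.real Set.univ ^ (2 - 2 / q)) := by
    have hexp : 0 ≤ 1 - 1 / q := sub_nonneg.2 ((div_le_one (by positivity)).2 hq)
    rw [← ofReal_measureReal, ENNReal.ofReal_rpow_of_nonneg measureReal_nonneg hexp,
      ← Set.univ_prod_univ, measureReal_prod_prod, ← pow_two, ← Real.rpow_two,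
      ← Real.rpow_mul measureReal_nonneg, mul_sub, mul_one, mul_one_div]
  rw [← lintegral_prod _ hsq, ← lintegral_prod _ (hsub.pow_const (2 * q)).ennreal_ofReal, ← hmass]
  simpa only [hpow] using lintegral_le_lintegral_rpow_mul_measure_univ_rpow hsq hq

variable {E : Type*} [NormedAddCommGroup E] [InnerProductSpace ℝ E] [CompleteSpace E] {f : Ω → E}

theorem integral_integral_norm_sub_sq (hf : MemLp f 2 μ) :
    ∫ x, ∫ y, ‖f x - f y‖ ^ 2 ∂μ ∂μ =
      2 * (μ.real Set.univ * ∫ x, ‖f x‖ ^ 2 ∂μ - ‖∫ x, f x ∂μ‖ ^ 2) := by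
  have hf_int : Integrable f μ := hf.integrable one_le_two
  have hf_sq : Integrable (fun x ↦ ‖f x‖ ^ 2) μ := hf.integrable_norm_pow two_ne_zero
  have hinner (w : E) : Integrable (fun x ↦ 2 * inner ℝ w (f x)) μ :=
    (hf_int.const_inner w).const_mul 2
  have hsub {g : Ω → ℝ} (hg : Integrable g μ) (w : E) :
      Integrable (fun x ↦ g x - 2 * inner ℝ w (f x)) μ := hg.sub (hinner w)
  have hsub_integral {g : Ω → ℝ} (hg : Integrable g μ) (w : E) :
      ∫ x, (g x - 2 * inner ℝ w (f x)) ∂μ = ∫ x, g x ∂μ - 2 * inner ℝ w (∫ x, f x ∂μ) := by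
    rw [integral_sub hg (hinner w), integral_const_mul, integral_inner hf_int]
  have hinside (x : Ω) : ∫ y, ‖f x - f y‖ ^ 2 ∂μ =
      μ.real Set.univ * ‖f x‖ ^ 2 - 2 * inner ℝ (∫ y, f y ∂μ) (f x) + ∫ y, ‖f y‖ ^ 2 ∂μ := by
    simp_rw [norm_sub_sq_real]
    rw [integral_add (hsub (integrable_const _) _) hf_sq, hsub_integral (integrable_const _),
      integral_const, smul_eq_mul, real_inner_comm]
  simp_rw [hinside]
  rw [integral_add (hsub (hf_sq.const_mul _) _) (integrable_const _),
    hsub_integral (hf_sq.const_mul _), integral_const_mul, integral_const, smul_eq_mul,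
    real_inner_self_eq_norm_sq]
  ring

theorem lintegral_lintegral_norm_sub_sq (hf : MemLp f 2 μ) :
    ∫⁻ x, ∫⁻ y, ENNReal.ofReal (‖f x - f y‖ ^ 2) ∂μ ∂μ =
      ENNReal.ofReal (2 * (μ.real Set.univ * ∫ x, ‖f x‖ ^ 2 ∂μ - ‖∫ x, f x ∂μ‖ ^ 2)) := by
  have hsq : Integrable (fun z : Ω × Ω ↦ ‖f z.1 - f z.2‖ ^ 2) (μ.prod μ) :=
    ((hf.comp_fst μ).sub (hf.comp_snd μ)).integrable_norm_pow two_ne_zero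
  rw [← integral_integral_norm_sub_sq hf, integral_integral hsq,
    ofReal_integral_eq_lintegral_ofReal hsq (Eventually.of_forall fun _ ↦ by positivity),
    lintegral_prod _ hsq.aestronglyMeasurable.aemeasurable.ennreal_ofReal]

theorem ofReal_two_mul_mass_mul_mass_sub_norm_integral_le (hf : AEStronglyMeasurable f μ)
    (hnorm : ∀ᵐ x ∂μ, ‖f x‖ = 1) :
    ENNReal.ofReal (2 * (μ.real Set.univ * (μ.real Set.univ - ‖∫ x, f x ∂μ‖))) ≤
      ∫⁻ x, ∫⁻ y, ENNReal.ofReal (‖f x - f y‖ ^ 2) ∂μ ∂μ := by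
  have hnorm_le : ∀ᵐ x ∂μ, ‖f x‖ ≤ 1 := hnorm.mono fun _ hx ↦ hx.le
  have hintegral_le : ‖∫ x, f x ∂μ‖ ≤ μ.real Set.univ := by
    simpa using norm_integral_le_of_norm_le_const hnorm_le
  have hintegral_sq : ∫ x, ‖f x‖ ^ 2 ∂μ = μ.real Set.univ := by
    simpa using integral_congr_ae (hnorm.mono fun x hx ↦ show ‖f x‖ ^ 2 = 1 by simp [hx])
  rw [lintegral_lintegral_norm_sub_sq (MemLp.of_bound hf 1 hnorm_le), hintegral_sq]
  gcongr
  nlinarith [norm_nonneg (∫ x, f x ∂μ)]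

end FiniteMeasure

section Weight

variable {Ω : Type*} [MetricSpace Ω] {E : Type*} [NormedAddCommGroup E] {R : ℝ}

theorem norm_sub_rpow_le_dist_weighted {x y : Ω} (hR : dist x y ≤ R)
    {p β : ℝ} (hp : 0 < p) (hβ : 0 ≤ β) (f : Ω → E) :
    ‖f x - f y‖ ^ p ≤ R ^ β * (‖f x - f y‖ ^ p / dist x y ^ β) := by
  rcases eq_or_ne x y with rfl | hxy
  · simp [Real.zero_rpow hp.ne']
  · have hdist : 0 < dist x y := dist_pos.2 hxy
    rw [mul_div_assoc', le_div_iff₀ (by positivity), mul_comm]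
    gcongr

variable [MeasurableSpace Ω] {μ : Measure Ω} {S : Set Ω}

theorem setLIntegral_setLIntegral_norm_sub_rpow_le_dist_weighted (hS : MeasurableSet S)
    (hR : ∀ x ∈ S, ∀ y ∈ S, dist x y ≤ R) {p β : ℝ} (hp : 0 < p) (hβ : 0 ≤ β) (f : Ω → E) :
    ∫⁻ x in S, ∫⁻ y in S, ENNReal.ofReal (‖f x - f y‖ ^ p) ∂μ ∂μ ≤
      ENNReal.ofReal (R ^ β) *
        ∫⁻ x in S, ∫⁻ y in S, ENNReal.ofReal (‖f x - f y‖ ^ p / dist x y ^ β) ∂μ ∂μ := by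
  simp_rw [← lintegral_const_mul' _ _ (ENNReal.ofReal_ne_top (r := R ^ β))]
  refine setLIntegral_mono' hS fun x hx ↦ setLIntegral_mono' hS fun y hy ↦ ?_
  rw [← ENNReal.ofReal_mul' (by positivity)]
  exact ENNReal.ofReal_le_ofReal
    (norm_sub_rpow_le_dist_weighted (hR x hx y hy) hp hβ f)

theorem setLIntegral_setLIntegral_norm_sub_sq_le_dist_weighted (hS : MeasurableSet S)
    (hμS : μ S ≠ ∞) (hR₀ : 0 ≤ R) (hR : ∀ x ∈ S, ∀ y ∈ S, dist x y ≤ R) {α q : ℝ}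
    (hα : 0 ≤ α) (hq : 1 ≤ q) {f : Ω → E} (hf : AEStronglyMeasurable f (μ.restrict S)) :
    ∫⁻ x in S, ∫⁻ y in S, ENNReal.ofReal (‖f x - f y‖ ^ 2) ∂μ ∂μ ≤
      ENNReal.ofReal (R ^ α * μ.real S ^ (2 - 2 / q)) *
        (∫⁻ x in S, ∫⁻ y in S,
          ENNReal.ofReal (‖f x - f y‖ ^ (2 * q) / dist x y ^ (α * q)) ∂μ ∂μ) ^ (1 / q) := by
  have : IsFiniteMeasure (μ.restrict S) := isFiniteMeasure_restrict.2 hμS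
  have hq₀ : 0 < q := one_pos.trans_le hq
  have hroot : ENNReal.ofReal (R ^ (α * q)) ^ (1 / q) = ENNReal.ofReal (R ^ α) := by
    rw [ENNReal.ofReal_rpow_of_nonneg (by positivity) (by positivity), ← Real.rpow_mul hR₀,
      mul_assoc, mul_one_div_cancel hq₀.ne', mul_one]
  have hholder := lintegral_lintegral_norm_sub_sq_le hf hq
  rw [measureReal_restrict_apply_univ] at hholder
  grw [hholder, setLIntegral_setLIntegral_norm_sub_rpow_le_dist_weighted hS hR (by positivity)
      (mul_nonneg hα hq₀.le) f, ENNReal.mul_rpow_of_nonneg _ _ (by positivity : 0 ≤ 1 / q), hroot,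
    ENNReal.ofReal_mul (by positivity), mul_right_comm]

end Weight

section UnitSpeed

variable {E : Type*} [NormedAddCommGroup E] [InnerProductSpace ℝ E] [CompleteSpace E]
  {γ : ℝ → E} {s t : ℝ}

theorem ofReal_two_mul_length_mul_length_sub_chord_le (hst : s ≤ t)
    (hγ : AbsolutelyContinuousOnInterval γ s t)
    (hspeed : ∀ᵐ x ∂volume.restrict (Set.Ioc s t), ‖deriv γ x‖ = 1) :
    ENNReal.ofReal (2 * ((t - s) * ((t - s) - ‖γ t - γ s‖))) ≤
      ∫⁻ v in Set.Ioc s t, ∫⁻ u in Set.Ioc s t,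
        ENNReal.ofReal (‖deriv γ v - deriv γ u‖ ^ 2) := by
  simpa [hst, setIntegral_deriv_eq_sub_of_norm_deriv_eq_one hst hγ hspeed] using
    ofReal_two_mul_mass_mul_mass_sub_norm_integral_le (aestronglyMeasurable_deriv γ _) hspeed

theorem stmt4_general (hst : s < t) (hγ : AbsolutelyContinuousOnInterval γ s t)
    (hspeed : ∀ᵐ x ∂volume.restrict (Set.Ioc s t), ‖deriv γ x‖ = 1) {α q : ℝ} (hα : 0 ≤ α)
    (hq : 1 ≤ q) :
    ENNReal.ofReal ((t - s) - ‖γ t - γ s‖) ≤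
      ENNReal.ofReal ((1 / 2) * (t - s) ^ (α + 1 - 2 / q)) *
        (∫⁻ v in Set.Ioc s t, ∫⁻ u in Set.Ioc s t,
            ENNReal.ofReal (‖deriv γ v - deriv γ u‖ ^ (2 * q) / |v - u| ^ (α * q))) ^
          (1 / q) := by
  have hT : 0 < t - s := sub_pos.2 hst
  have henergy := setLIntegral_setLIntegral_norm_sub_sq_le_dist_weighted (μ := volume)
    measurableSet_Ioc measure_Ioc_lt_top.ne hT.le
    (fun v hv u hu ↦ Real.dist_le_of_mem_Icc (Set.Ioc_subset_Icc_self hv)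
      (Set.Ioc_subset_Icc_self hu)) hα hq (aestronglyMeasurable_deriv γ _)
  simp only [Real.volume_real_Ioc_of_le hst.le, Real.dist_eq] at henergy
  set J := ∫⁻ v in Set.Ioc s t, ∫⁻ u in Set.Ioc s t,
    ENNReal.ofReal (‖deriv γ v - deriv γ u‖ ^ (2 * q) / |v - u| ^ (α * q))
  have hexponent : (t - s) ^ (α + 1 - 2 / q) = (t - s) ^ α * (t - s) ^ (2 - 2 / q) / (t - s) := by
    rw [← Real.rpow_add hT, ← Real.rpow_sub_one hT.ne']
    ring_nf
  calc ENNReal.ofReal ((t - s) - ‖γ t - γ s‖)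
      = ENNReal.ofReal (1 / (2 * (t - s))) *
          ENNReal.ofReal (2 * ((t - s) * ((t - s) - ‖γ t - γ s‖))) := by
        rw [← ENNReal.ofReal_mul (by positivity)]
        field_simp
    _ ≤ ENNReal.ofReal (1 / (2 * (t - s))) *
          (ENNReal.ofReal ((t - s) ^ α * (t - s) ^ (2 - 2 / q)) * J ^ (1 / q)) := by
        grw [ofReal_two_mul_length_mul_length_sub_chord_le hst.le hγ hspeed, henergy]
    _ = ENNReal.ofReal ((1 / 2) * (t - s) ^ (α + 1 - 2 / q)) * J ^ (1 / q) := by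
        rw [← mul_assoc, ← ENNReal.ofReal_mul (by positivity), hexponent]
        congr 2
        field_simp

end UnitSpeed

theorem stmt4 (d : ℕ) (hd : 2 ≤ d) (α q : ℝ) (hα : 0 < α) (hq : 1 ≤ q)
    (L : ℝ) (hL : 0 < L) (γ : ℝ → EuclideanSpace ℝ (Fin d))
    (hper : Function.Periodic γ L)
    (hlip : ∃ M : ℝ≥0, LipschitzWith M γ)
    (hspeed : ∀ᵐ s : ℝ ∂volume, ‖deriv γ s‖ = 1)
    (s t : ℝ) (hst : s < t) :
    ENNReal.ofReal ((t - s) - ‖γ t - γ s‖) ≤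
      ENNReal.ofReal ((1 / 2) * (t - s) ^ (α + 1 - 2 / q)) *
        (∫⁻ v in Set.Ioc s t, ∫⁻ u in Set.Ioc s t,
            ENNReal.ofReal (‖deriv γ v - deriv γ u‖ ^ (2 * q) / |v - u| ^ (α * q))) ^
          (1 / q) := by
  obtain ⟨M, hM⟩ := hlip
  exact stmt4_general hst hM.lipschitzOnWith.absolutelyContinuousOnInterval
    (ae_restrict_of_ae hspeed) hα.le hq
end

section
/- Let d ≥ 2 and let γ : ℝ → ℝ^d be a closed curve of length L parametrized by arc length whose derivative γ' is Lipschitz, and set K := ‖γ''‖_{L^∞}. Then for all real numbers s ≤ t: (i) for every α > 0, (t−s)^α − |γ(t) − γ(s)|^α ≤ (α/2 + 1)(K²/2)(t−s)^{α+2}; (ii) if moreover 0 < α ≤ 2, then (t−s)^α − |γ(t) − γ(s)|^α ≤ (K^α / 2^{α/2})(t−s)^{2α}. -/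
open MeasureTheory Real Filter
open scoped Classical ENNReal NNReal

/-!
Write `r = t - s` and `c = ‖γ t - γ s‖`. Projecting the arc onto its tangent at the midpoint
parameter gives `r - c ≤ K² r³ / 8`: every parameter is within `r / 2` of the midpoint, and
unit vectors satisfy `⟪u, v⟫ = 1 - ‖u - v‖² / 2`. Hence `r² - c² ≤ K² r⁴ / 4`, and both estimates
follow by comparing `r ^ α` and `c ^ α` as powers `α / 2` of `r²` and `c²`: a Bernoulli-type
inequality gives the first one, subadditivity of `x ↦ x ^ (α / 2)` for `α ≤ 2` the second.
-/

section PowerDifferences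

variable {a b p u : ℝ}

lemma one_sub_rpow_le_mul_one_sub (hp : 0 ≤ p) (hu₀ : 0 ≤ u) (hu₁ : u ≤ 1) :
    1 - u ^ p ≤ (p + 1) * (1 - u) := by
  rcases le_total p 1 with hp₁ | hp₁
  · have hself : u ≤ u ^ p := self_le_rpow_of_le_one hu₀ hu₁ hp₁
    nlinarith
  · have bernoulli := one_add_mul_self_le_rpow_one_add (s := u - 1) (by linarith) hp₁
    rw [add_sub_cancel] at bernoulli
    linarith

lemma rpow_sub_rpow_le_mul_sub (hp : 0 ≤ p) (hb : 0 ≤ b) (hba : b ≤ a) :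
    a ^ p - b ^ p ≤ (p + 1) * a ^ (p - 1) * (a - b) := by
  rcases (hb.trans hba).eq_or_lt with rfl | ha
  · simp [le_antisymm hba hb]
  calc a ^ p - b ^ p = a ^ p * (1 - (b / a) ^ p) := by
        rw [div_rpow hb ha.le]
        field_simp
    _ ≤ a ^ p * ((p + 1) * (1 - b / a)) := by
        gcongr
        exact one_sub_rpow_le_mul_one_sub hp (by positivity) (div_le_one_of_le₀ hba ha.le)
    _ = (p + 1) * a ^ (p - 1) * (a - b) := by
        rw [rpow_sub_one ha.ne']
        field_simp

lemma rpow_sub_rpow_le_rpow_sub (hp₀ : 0 ≤ p) (hp₁ : p ≤ 1) (hb : 0 ≤ b) (hba : b ≤ a) :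
    a ^ p - b ^ p ≤ (a - b) ^ p := by
  have hadd := rpow_add_le_add_rpow (sub_nonneg.2 hba) hb hp₀ hp₁
  rw [sub_add_cancel] at hadd
  linarith

lemma sq_rpow_div_two (ha : 0 ≤ a) (p : ℝ) : (a ^ 2) ^ (p / 2) = a ^ p := by
  rw [rpow_div_two_eq_sqrt _ (sq_nonneg a), sqrt_sq ha]

lemma rpow_sub_rpow_le_mul_sq_sub_sq (hp : 0 ≤ p) (hb : 0 ≤ b) (hba : b ≤ a) :
    a ^ p - b ^ p ≤ (p / 2 + 1) * a ^ (p - 2) * (a ^ 2 - b ^ 2) := by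
  have ha : 0 ≤ a := hb.trans hba
  have h := rpow_sub_rpow_le_mul_sub (p := p / 2) (by linarith) (sq_nonneg b)
    (pow_le_pow_left₀ hb hba 2)
  rwa [sq_rpow_div_two ha, sq_rpow_div_two hb, show p / 2 - 1 = (p - 2) / 2 by ring,
    sq_rpow_div_two ha] at h

lemma rpow_sub_rpow_le_sq_sub_sq_rpow (hp₀ : 0 ≤ p) (hp₂ : p ≤ 2) (hb : 0 ≤ b) (hba : b ≤ a) :
    a ^ p - b ^ p ≤ (a ^ 2 - b ^ 2) ^ (p / 2) := by
  have h := rpow_sub_rpow_le_rpow_sub (p := p / 2) (by linarith) (by linarith) (sq_nonneg b)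
    (pow_le_pow_left₀ hb hba 2)
  rwa [sq_rpow_div_two (hb.trans hba), sq_rpow_div_two hb] at h

end PowerDifferences

section UnitSpeedArc

variable {E : Type*} [NormedAddCommGroup E] [InnerProductSpace ℝ E] {γ γ' : ℝ → E} {s t : ℝ}

lemma inner_eq_one_sub_norm_sub_sq_div_two {u v : E} (hu : ‖u‖ = 1) (hv : ‖v‖ = 1) :
    inner ℝ u v = 1 - ‖u - v‖ ^ 2 / 2 := by
  rw [norm_sub_sq_real, hu, hv]
  ring

lemma mul_sub_le_inner_sub_of_le_inner_deriv (hst : s ≤ t)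
    (hγ : ∀ x ∈ Set.Icc s t, HasDerivWithinAt γ (γ' x) (Set.Icc s t) x) {e : E} {m : ℝ}
    (hm : ∀ x ∈ Set.Icc s t, m ≤ inner ℝ e (γ' x)) :
    m * (t - s) ≤ inner ℝ e (γ t - γ s) := by
  have hderiv : ∀ x ∈ Set.Icc s t,
      HasDerivWithinAt (fun y ↦ inner ℝ e (γ y)) (inner ℝ e (γ' x)) (Set.Icc s t) x :=
    fun x hx ↦ by simpa using (hasDerivWithinAt_const x _ e).inner ℝ (hγ x hx)
  have hderivAt : ∀ x ∈ interior (Set.Icc s t),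
      HasDerivAt (fun y ↦ inner ℝ e (γ y)) (inner ℝ e (γ' x)) x :=
    fun x hx ↦ (hderiv x (interior_subset hx)).hasDerivAt (mem_interior_iff_mem_nhds.1 hx)
  rw [inner_sub_right]
  exact (convex_Icc s t).mul_sub_le_image_sub_of_le_deriv
    (fun x hx ↦ (hderiv x hx).continuousWithinAt)
    (fun x hx ↦ (hderivAt x hx).differentiableAt.differentiableWithinAt)
    (fun x hx ↦ (hderivAt x hx).deriv ▸ hm x (interior_subset hx))
    s (Set.left_mem_Icc.2 hst) t (Set.right_mem_Icc.2 hst) hst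

lemma norm_sub_le_of_unit_speed (hst : s ≤ t)
    (hγ : ∀ x ∈ Set.Icc s t, HasDerivWithinAt γ (γ' x) (Set.Icc s t) x)
    (hspeed : ∀ x ∈ Set.Icc s t, ‖γ' x‖ = 1) :
    ‖γ t - γ s‖ ≤ t - s := by
  simpa using norm_image_sub_le_of_norm_deriv_le_segment' hγ
    (fun x hx ↦ (hspeed x (Set.Ico_subset_Icc_self hx)).le) t (Set.right_mem_Icc.2 hst)

variable {K : ℝ≥0}

lemma sub_norm_sub_le_of_unit_speed (hst : s ≤ t)
    (hγ : ∀ x ∈ Set.Icc s t, HasDerivWithinAt γ (γ' x) (Set.Icc s t) x)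
    (hspeed : ∀ x ∈ Set.Icc s t, ‖γ' x‖ = 1) (hK : LipschitzOnWith K γ' (Set.Icc s t)) :
    t - s - ‖γ t - γ s‖ ≤ (K : ℝ) ^ 2 / 8 * (t - s) ^ 3 := by
  set mid := (s + t) / 2 with hmid
  have mid_mem : mid ∈ Set.Icc s t := ⟨by linarith, by linarith⟩
  have tangent_close : ∀ x ∈ Set.Icc s t, ‖γ' mid - γ' x‖ ≤ K * ((t - s) / 2) := by
    intro x hx
    have hdist : |mid - x| ≤ (t - s) / 2 := abs_le.2 ⟨by linarith [hx.2], by linarith [hx.1]⟩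
    calc ‖γ' mid - γ' x‖ ≤ K * |mid - x| := by
          simpa only [dist_eq_norm, Real.norm_eq_abs] using hK.dist_le_mul mid mid_mem x hx
      _ ≤ K * ((t - s) / 2) := by gcongr
  have tangent_inner : ∀ x ∈ Set.Icc s t,
      1 - (K * ((t - s) / 2)) ^ 2 / 2 ≤ inner ℝ (γ' mid) (γ' x) := by
    intro x hx
    rw [inner_eq_one_sub_norm_sub_sq_div_two (hspeed mid mid_mem) (hspeed x hx)]
    gcongr
    exact tangent_close x hx
  have chord_inner : inner ℝ (γ' mid) (γ t - γ s) ≤ ‖γ t - γ s‖ := by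
    simpa [hspeed mid mid_mem] using real_inner_le_norm (γ' mid) (γ t - γ s)
  have projection := mul_sub_le_inner_sub_of_le_inner_deriv hst hγ tangent_inner
  linear_combination projection + chord_inner

lemma sq_sub_norm_sub_sq_le_of_unit_speed (hst : s ≤ t)
    (hγ : ∀ x ∈ Set.Icc s t, HasDerivWithinAt γ (γ' x) (Set.Icc s t) x)
    (hspeed : ∀ x ∈ Set.Icc s t, ‖γ' x‖ = 1) (hK : LipschitzOnWith K γ' (Set.Icc s t)) :
    (t - s) ^ 2 - ‖γ t - γ s‖ ^ 2 ≤ (K : ℝ) ^ 2 / 4 * (t - s) ^ 4 := by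
  have hchord := norm_sub_le_of_unit_speed hst hγ hspeed
  have : 0 ≤ t - s := sub_nonneg.2 hst
  calc (t - s) ^ 2 - ‖γ t - γ s‖ ^ 2
      = (t - s - ‖γ t - γ s‖) * (t - s + ‖γ t - γ s‖) := by ring
    _ ≤ (K : ℝ) ^ 2 / 8 * (t - s) ^ 3 * (t - s + (t - s)) := by
        gcongr
        exact sub_norm_sub_le_of_unit_speed hst hγ hspeed hK
    _ = (K : ℝ) ^ 2 / 4 * (t - s) ^ 4 := by ring

theorem stmt5_general (hst : s ≤ t)
    (hγ : ∀ x ∈ Set.Icc s t, HasDerivWithinAt γ (γ' x) (Set.Icc s t) x)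
    (hspeed : ∀ x ∈ Set.Icc s t, ‖γ' x‖ = 1) (hK : LipschitzOnWith K γ' (Set.Icc s t))
    {α : ℝ} (hα : 0 ≤ α) :
    ((t - s) ^ α - ‖γ t - γ s‖ ^ α ≤ (α / 2 + 1) * ((K : ℝ) ^ 2 / 2) * (t - s) ^ (α + 2)) ∧
      (α ≤ 2 →
        (t - s) ^ α - ‖γ t - γ s‖ ^ α ≤
          (K : ℝ) ^ α / (2 : ℝ) ^ (α / 2) * (t - s) ^ (2 * α)) := by
  have hr : 0 ≤ t - s := sub_nonneg.2 hst
  have hc := norm_nonneg (γ t - γ s)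
  have hcr := norm_sub_le_of_unit_speed hst hγ hspeed
  have hsq : (t - s) ^ 2 - ‖γ t - γ s‖ ^ 2 ≤ (K : ℝ) ^ 2 / 2 * (t - s) ^ 4 :=
    (sq_sub_norm_sub_sq_le_of_unit_speed hst hγ hspeed hK).trans (by gcongr; norm_num)
  refine ⟨?_, fun hα₂ ↦ ?_⟩
  · calc (t - s) ^ α - ‖γ t - γ s‖ ^ α
        ≤ (α / 2 + 1) * (t - s) ^ (α - 2) * ((t - s) ^ 2 - ‖γ t - γ s‖ ^ 2) :=
          rpow_sub_rpow_le_mul_sq_sub_sq hα hc hcr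
      _ ≤ (α / 2 + 1) * (t - s) ^ (α - 2) * ((K : ℝ) ^ 2 / 2 * (t - s) ^ 4) := by gcongr
      _ = (α / 2 + 1) * ((K : ℝ) ^ 2 / 2) * (t - s) ^ (α + 2) := by
          rw [show α + 2 = α - 2 + (4 : ℕ) by push_cast; ring,
            rpow_add_natCast' hr (by push_cast; linarith)]
          ring
  · calc (t - s) ^ α - ‖γ t - γ s‖ ^ α
        ≤ ((t - s) ^ 2 - ‖γ t - γ s‖ ^ 2) ^ (α / 2) :=
          rpow_sub_rpow_le_sq_sub_sq_rpow hα hα₂ hc hcr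
      _ ≤ ((K : ℝ) ^ 2 / 2 * ((t - s) ^ 2) ^ 2) ^ (α / 2) := by
          rw [← pow_mul]
          exact rpow_le_rpow (sub_nonneg.2 (by gcongr)) hsq (by positivity)
      _ = (K : ℝ) ^ α / (2 : ℝ) ^ (α / 2) * (t - s) ^ (2 * α) := by
          rw [mul_rpow (by positivity) (by positivity), div_rpow (by positivity) (by positivity),
            sq_rpow_div_two K.coe_nonneg, sq_rpow_div_two (by positivity), rpow_mul hr, rpow_two]

end UnitSpeedArc

theorem stmt5 (d : ℕ) (hd : 2 ≤ d) (L : ℝ) (hL : 0 < L)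
    (γ : ℝ → EuclideanSpace ℝ (Fin d)) (K : ℝ≥0)
    (hper : Function.Periodic γ L)
    (hdiff : Differentiable ℝ γ)
    (hspeed : ∀ s : ℝ, ‖deriv γ s‖ = 1)
    (hK : LipschitzWith K (deriv γ))
    (α : ℝ) (hα : 0 < α) (s t : ℝ) (hst : s ≤ t) :
    ((t - s) ^ α - ‖γ t - γ s‖ ^ α ≤ (α / 2 + 1) * ((K : ℝ) ^ 2 / 2) * (t - s) ^ (α + 2)) ∧
      (α ≤ 2 →
        (t - s) ^ α - ‖γ t - γ s‖ ^ α ≤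
          (K : ℝ) ^ α / (2 : ℝ) ^ (α / 2) * (t - s) ^ (2 * α)) := by
  exact stmt5_general hst (fun x _ ↦ (hdiff x).hasDerivAt.hasDerivWithinAt) (fun x _ ↦ hspeed x)
    hK.lipschitzOnWith hα.le
end

section
/- Let d ≥ 2, α ∈ (0,∞) and q ∈ [1,∞) satisfy 2 ≤ αq < 2q+1, and set σ := (αq−1)/(2q). Let γ : ℝ → ℝ^d be a 1-periodic, injective-on-[0,1) closed curve parametrized by arc length of class C¹ with ∫₀¹ ∫₀¹ |γ'(t) − γ'(s)|^{2q} / D(s,t)^{1+2qσ} ds dt < ∞ (i.e. γ ∈ W^{1+σ,2q}). Then there exists a sequence (p_n), where p_n is the arc-length parametrization of an equilateral closed polygon with n edges and total length 1, such that ‖p_n − γ‖_{L^∞} + ‖p_n' − γ'‖_{L^∞} → 0 and E_n^{α,q}(p_n) → E^{α,q}(γ) as n → ∞. -/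
open MeasureTheory Real Filter
open scoped Classical ENNReal NNReal

/-!
Let `A k` be the mean of the tangent of `γ` over the `k`-th of `n` equal parameter cells. The `A k`
sum to zero but are not unit vectors. If `c` minimises `∑ k, ‖A k + c‖`, criticality says precisely
that the unit vectors `(A k + c) / ‖A k + c‖` sum to zero, so they are the edges of a closed
equilateral polygon. Pairing with `γ'`, whose mean is zero, gives `∫ ‖γ' + v‖ > 1` for `v ≠ 0`,
which forces the minimisers to tend to zero; hence the edges converge uniformly to the tangent.

The discrete energy is the integral of a step function over the unit square. For an arc of
intrinsic length `D`, the defect between `D` and the chord is a mean square oscillation of the edges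
over the arc, so by Jensen the density is at most a constant times
`D ^ (-α * q - 1) * ∫ ‖γ' u - γ' x‖ ^ (2 * q)`, with `u` ranging over a ball around `x` of radius
comparable to `D`. Fubini identifies the integral of this majorant with the Sobolev seminorm up to a
constant, and dominated convergence concludes. The chord stays comparable to `D` because `γ` is
bi-Lipschitz and the polygons are `C¹`-close to it.
-/

section CircleDistance

theorem iDist_one_eq_norm (s t : ℝ) : iDist 1 s t = ‖((t - s : ℝ) : UnitAddCircle)‖ := by
  simp only [iDist, mul_one, UnitAddCircle.norm_eq]
  exact le_antisymm (ciInf_le ⟨0, Set.forall_mem_range.2 fun _ ↦ abs_nonneg _⟩ _)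
    (le_ciInf fun k ↦ round_le _ k)

theorem iDist_one_nonneg (s t : ℝ) : 0 ≤ iDist 1 s t := by
  rw [iDist_one_eq_norm]
  exact norm_nonneg _

theorem iDist_one_comm (s t : ℝ) : iDist 1 s t = iDist 1 t s := by
  rw [iDist_one_eq_norm, iDist_one_eq_norm, ← norm_neg, ← AddCircle.coe_neg, neg_sub]

theorem iDist_one_le_half (s t : ℝ) : iDist 1 s t ≤ 1 / 2 := by
  simpa [iDist_one_eq_norm] using
    AddCircle.norm_le_half_period (1 : ℝ) one_ne_zero (x := ((t - s : ℝ) : AddCircle (1 : ℝ)))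

theorem iDist_one_le_abs (s t : ℝ) : iDist 1 s t ≤ |t - s| := by
  rw [iDist_one_eq_norm, UnitAddCircle.norm_eq]
  simpa using round_le (t - s) 0

theorem iDist_one_eq_abs {s t : ℝ} (h : |t - s| ≤ 1 / 2) : iDist 1 s t = |t - s| := by
  rw [iDist_one_eq_norm]
  exact (AddCircle.norm_coe_eq_abs_iff (1 : ℝ) one_ne_zero).2 (by simpa using h)

theorem iDist_one_div_add_div {n : ℕ} (hn : 0 < n) (a : ℤ) {m : ℕ} (hm : 2 * m ≤ n) :
    iDist 1 (a / n) ((a + m : ℝ) / n) = m / n := by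
  have hn' : (0 : ℝ) < n := Nat.cast_pos.2 hn
  have habs : |(a + m : ℝ) / n - a / n| = m / n := by
    rw [← sub_div, add_sub_cancel_left, abs_of_nonneg (by positivity)]
  rw [← habs]
  refine iDist_one_eq_abs ?_
  rw [habs, div_le_div_iff₀ hn' two_pos]
  exact_mod_cast (by omega : m * 2 ≤ 1 * n)

theorem iDist_one_periodic_left (t : ℝ) : Function.Periodic (fun s ↦ iDist 1 s t) 1 := fun s ↦ by
  simp [iDist_one_eq_norm]

theorem iDist_one_periodic_right (s : ℝ) : Function.Periodic (iDist 1 s) 1 := fun t ↦ by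
  simp [iDist_one_eq_norm]

theorem iDist_one_eq_zero_iff {s t : ℝ} : iDist 1 s t = 0 ↔ ∃ k : ℤ, t - s = k := by
  rw [iDist_one_eq_norm, norm_eq_zero, AddCircle.coe_eq_zero_iff]
  simp [eq_comm]

theorem abs_iDist_one_sub_iDist_one_le (s t s' t' : ℝ) :
    |iDist 1 s t - iDist 1 s' t'| ≤ |t - s - (t' - s')| := by
  have hnorm (u : ℝ) : ‖(u : UnitAddCircle)‖ ≤ |u| := by
    simpa [iDist_one_eq_norm] using iDist_one_le_abs 0 u
  simp only [iDist_one_eq_norm]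
  refine (abs_norm_sub_norm_le _ _).trans ?_
  rw [← AddCircle.coe_sub]
  exact hnorm _

theorem iDist_one_eq_min {s t : ℝ} (h : |t - s| ≤ 1) :
    iDist 1 s t = min |t - s| (1 - |t - s|) := by
  rcases le_or_gt |t - s| (1 / 2) with hnear | hfar
  · rw [iDist_one_eq_abs hnear, min_eq_left (by linarith)]
  rw [min_eq_right (by linarith)]
  rcases le_total 0 (t - s) with hst | hst
  · rw [abs_of_nonneg hst] at h hfar ⊢
    have habs : |t - 1 - s| = 1 - (t - s) := by
      rw [abs_of_nonpos (by linarith)]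
      ring
    rw [← (iDist_one_periodic_right s).sub_eq t, iDist_one_eq_abs (by linarith), habs]
  · rw [abs_of_nonpos hst] at h hfar ⊢
    have habs : |t + 1 - s| = 1 - -(t - s) := by
      rw [abs_of_nonneg (by linarith)]
      ring
    rw [← iDist_one_periodic_right s t, iDist_one_eq_abs (by linarith), habs]

theorem continuous_iDist_one : Continuous fun x : ℝ × ℝ ↦ iDist 1 x.1 x.2 := by
  simp only [iDist_one_eq_norm]
  exact continuous_norm.comp
    ((AddCircle.continuous_mk' 1).comp (continuous_snd.sub continuous_fst))

theorem measurable_iDist_one {X : Type*} [MeasurableSpace X] {f g : X → ℝ} (hf : Measurable f)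
    (hg : Measurable g) : Measurable fun x ↦ iDist 1 (f x) (g x) := by
  have hcomp := continuous_iDist_one.measurable.comp (hf.prodMk hg)
  exact hcomp

end CircleDistance

section PeriodicFunctions

theorem periodic_one_map_fract {X : Type*} {f : ℝ → X} (hf : Function.Periodic f 1) (t : ℝ) :
    f (Int.fract t) = f t := by
  simpa only [zsmul_one, Int.self_sub_floor] using hf.sub_zsmul_eq ⌊t⌋ (x := t)

theorem uniformContinuous_of_periodic_one {X : Type*} [UniformSpace X] {f : ℝ → X}
    (hf : Continuous f) (hper : Function.Periodic f 1) : UniformContinuous f := by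
  have hlift : UniformContinuous (hper.lift : UnitAddCircle → X) :=
    CompactSpace.uniformContinuous_of_continuous (continuous_coinduced_dom.2 hf)
  exact hlift.comp (uniformContinuous_addMonoidHom_of_continuous
    (f := QuotientAddGroup.mk' (AddSubgroup.zmultiples (1 : ℝ))) continuous_quotient_mk')

theorem setLIntegral_Ioc_add_one_eq {f : ℝ → ℝ≥0∞} (hf : Function.Periodic f 1) (a b : ℝ) :
    ∫⁻ x in Set.Ioc a (a + 1), f x = ∫⁻ x in Set.Ioc b (b + 1), f x :=
  (UnitAddCircle.lintegral_preimage a hf.lift).trans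
    (UnitAddCircle.lintegral_preimage b hf.lift).symm

theorem exists_int_sub_eq_of_injOn_Ico {X : Type*} {f : ℝ → X} (hper : Function.Periodic f 1)
    (hinj : Set.InjOn f (Set.Ico 0 1)) {s t : ℝ} (hst : f s = f t) : ∃ k : ℤ, t - s = k := by
  rw [← periodic_one_map_fract hper s, ← periodic_one_map_fract hper t] at hst
  obtain ⟨k, hk⟩ := Int.fract_eq_fract.1 (hinj ⟨Int.fract_nonneg s, Int.fract_lt_one s⟩
    ⟨Int.fract_nonneg t, Int.fract_lt_one t⟩ hst)
  exact ⟨-k, by push_cast; linarith⟩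

theorem iDist_one_fract (s t : ℝ) : iDist 1 (Int.fract s) (Int.fract t) = iDist 1 s t := by
  rw [periodic_one_map_fract (iDist_one_periodic_right _),
    periodic_one_map_fract (iDist_one_periodic_left t)]

theorem exists_pos_le_norm_sub_of_le_iDist {E : Type*} [NormedAddCommGroup E] {γ : ℝ → E}
    (hcont : Continuous γ) (hper : Function.Periodic γ 1) (hinj : Set.InjOn γ (Set.Ico 0 1))
    {δ : ℝ} (hδ : 0 < δ) :
    ∃ m > 0, ∀ s t, δ ≤ iDist 1 s t → m ≤ ‖γ t - γ s‖ := by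
  set K : Set (ℝ × ℝ) := Set.Icc 0 1 ×ˢ Set.Icc 0 1 ∩ {x | δ ≤ iDist 1 x.1 x.2}
  have hcompact : IsCompact K := (isCompact_Icc.prod isCompact_Icc).inter_right
    (isClosed_le continuous_const continuous_iDist_one)
  have hpos : ∀ x ∈ K, 0 < ‖γ x.2 - γ x.1‖ := fun x hx ↦ by
    refine norm_pos_iff.2 (sub_ne_zero.2 fun heq ↦ ?_)
    have hzero := iDist_one_eq_zero_iff.2 (exists_int_sub_eq_of_injOn_Ico hper hinj heq.symm)
    exact (hδ.trans_le hx.2).ne' hzero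
  obtain ⟨m, hm, hle⟩ := hcompact.exists_forall_le' (a := 0)
    (f := fun x : ℝ × ℝ ↦ ‖γ x.2 - γ x.1‖) (by fun_prop) hpos
  refine ⟨m, hm, fun s t hst ↦ ?_⟩
  have hmem : (Int.fract s, Int.fract t) ∈ K :=
    ⟨⟨⟨Int.fract_nonneg s, (Int.fract_lt_one s).le⟩, Int.fract_nonneg t, (Int.fract_lt_one t).le⟩,
      by simpa only [Set.mem_ofPred_eq, iDist_one_fract] using hst⟩
  simpa only [periodic_one_map_fract hper] using hle _ hmem

end PeriodicFunctions

section Normalize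

variable {E : Type*} [NormedAddCommGroup E]

open NormedSpace

theorem norm_normalize_sub_normalize_le [NormedSpace ℝ E] {x y : E} (hx : x ≠ 0) (hy : y ≠ 0) :
    ‖normalize x - normalize y‖ ≤ 2 * ‖x - y‖ / ‖y‖ := by
  have hy' : 0 < ‖y‖ := norm_pos_iff.2 hy
  have hsplit : ‖y‖ • (normalize x - normalize y) = (‖y‖ - ‖x‖) • normalize x + (x - y) := by
    rw [sub_smul, smul_sub, norm_smul_normalize, norm_smul_normalize]
    abel
  rw [le_div_iff₀' hy', ← abs_of_pos hy', ← Real.norm_eq_abs, ← norm_smul, hsplit, two_mul]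
  refine (norm_add_le _ _).trans (add_le_add_left ?_ _)
  rw [norm_smul, norm_normalize hx, mul_one, norm_sub_rev x y]
  exact abs_norm_sub_norm_le y x

variable [InnerProductSpace ℝ E]

theorem hasDerivAt_norm_add_smul {x : E} (hx : x ≠ 0) (e : E) :
    HasDerivAt (fun τ : ℝ ↦ ‖x + τ • e‖) (inner ℝ (normalize x) e) 0 := by
  have hline : HasDerivAt (fun τ : ℝ ↦ x + τ • e) e 0 := by
    simpa using ((hasDerivAt_id (0 : ℝ)).smul_const e).const_add x
  have hsqrt := hline.norm_sq.sqrt (by simpa using hx)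
  simp only [zero_smul, add_zero, Real.sqrt_sq (norm_nonneg _)] at hsqrt
  convert hsqrt using 1
  rw [NormedSpace.normalize, real_inner_smul_left]
  field_simp

theorem sum_normalize_eq_zero_of_isLocalMin {ι : Type*} {s : Finset ι} {A : ι → E} {c : E}
    (hA : ∀ i ∈ s, A i + c ≠ 0) (hmin : IsLocalMin (fun c' ↦ ∑ i ∈ s, ‖A i + c'‖) c) :
    ∑ i ∈ s, normalize (A i + c) = 0 := by
  set U := ∑ i ∈ s, normalize (A i + c)
  have hderiv : HasDerivAt (fun τ : ℝ ↦ ∑ i ∈ s, ‖A i + c + τ • U‖)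
      (∑ i ∈ s, inner ℝ (normalize (A i + c)) U) 0 :=
    HasDerivAt.fun_sum fun i hi ↦ hasDerivAt_norm_add_smul (hA i hi) U
  have hline : Tendsto (fun τ : ℝ ↦ c + τ • U) (nhds 0) (nhds c) := by
    have hcont : Continuous fun τ : ℝ ↦ c + τ • U := by fun_prop
    simpa using hcont.tendsto 0
  have hmin' : IsLocalMin (fun τ : ℝ ↦ ∑ i ∈ s, ‖A i + c + τ • U‖) 0 := by
    filter_upwards [hline.eventually hmin] with τ hτ
    simpa [add_assoc] using hτ
  have hzero := hmin'.hasDerivAt_eq_zero hderiv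
  rwa [← sum_inner, inner_self_eq_zero] at hzero

theorem card_sub_norm_sum_le {ι : Type*} {s : Finset ι} {b : ι → E} {w : E}
    (hb : ∀ i ∈ s, ‖b i‖ = 1) (hw : ‖w‖ = 1) :
    s.card - ‖∑ i ∈ s, b i‖ ≤ (∑ i ∈ s, ‖b i - w‖ ^ 2) / 2 := by
  have hinner : ∀ i ∈ s, 1 - inner ℝ (b i) w = ‖b i - w‖ ^ 2 / 2 := fun i hi ↦ by
    rw [norm_sub_sq_real, hb i hi, hw]
    ring
  have hcs := real_inner_le_norm (∑ i ∈ s, b i) w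
  rw [hw, mul_one, sum_inner] at hcs
  rw [Finset.sum_div, ← Finset.sum_congr rfl hinner, Finset.sum_sub_distrib,
    Finset.sum_const, nsmul_one]
  exact sub_le_sub_left hcs _

end Normalize

section Slope

variable {E : Type*} [NormedAddCommGroup E] [NormedSpace ℝ E] {γ T : ℝ → E} {a b : ℝ}

theorem norm_slope_sub_le (hγ : ∀ s, HasDerivAt γ (T s) s) (hab : a < b) {v : E} {ε : ℝ}
    (h : ∀ u ∈ Set.Icc a b, ‖T u - v‖ ≤ ε) : ‖slope γ a b - v‖ ≤ ε := by
  have hba : 0 < b - a := sub_pos.2 hab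
  have htaylor := norm_image_sub_le_of_norm_deriv_le_segment' (f := fun u ↦ γ u - u • v)
    (f' := fun u ↦ T u - v) (C := ε)
    (fun x _ ↦ ((hγ x).sub (by simpa using (hasDerivAt_id x).smul_const v)).hasDerivWithinAt)
    (fun x hx ↦ h x (Set.Ico_subset_Icc_self hx)) b (Set.right_mem_Icc.2 hab.le)
  have hslope : (b - a) • (slope γ a b - v) = γ b - b • v - (γ a - a • v) := by
    rw [smul_sub, sub_smul_slope, vsub_eq_sub, sub_smul]
    abel
  rw [← hslope, norm_smul, Real.norm_of_nonneg hba.le, mul_comm] at htaylor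
  exact le_of_mul_le_mul_right htaylor hba

theorem norm_slope_sub_rpow_le [CompleteSpace E] (hγ : ∀ s, HasDerivAt γ (T s) s)
    (hT : Continuous T) (hab : a < b) (v : E) {r : ℝ} (hr : 1 ≤ r) :
    ‖slope γ a b - v‖ ^ r ≤ (b - a)⁻¹ * ∫ u in a..b, ‖T u - v‖ ^ r := by
  have hba : 0 < b - a := sub_pos.2 hab
  have hdiff : Continuous fun u ↦ T u - v := hT.sub continuous_const
  have hmean : slope γ a b - v = (b - a)⁻¹ • ∫ u in a..b, (T u - v) := by
    rw [intervalIntegral.integral_sub (hT.intervalIntegrable _ _) (by simp),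
      intervalIntegral.integral_eq_sub_of_hasDerivAt (fun s _ ↦ hγ s) (hT.intervalIntegrable _ _),
      intervalIntegral.integral_const, smul_sub, inv_smul_smul₀ hba.ne', slope, vsub_eq_sub]
  have hnorm : ‖slope γ a b - v‖ ≤ (b - a)⁻¹ * ∫ u in a..b, ‖T u - v‖ := by
    rw [hmean, norm_smul, norm_inv, Real.norm_of_nonneg hba.le]
    gcongr
    exact intervalIntegral.norm_integral_le_integral_norm hab.le
  have hjensen := (convexOn_rpow hr).map_set_average_le (μ := volume) (t := Set.Ioc a b)
    (f := fun u ↦ ‖T u - v‖) (Real.continuous_rpow_const (by positivity)).continuousOn isClosed_Ici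
    (by simpa using hab) (by simp) (Eventually.of_forall fun u ↦ norm_nonneg _)
    hdiff.norm.integrableOn_Ioc
    (hdiff.norm.rpow_const fun _ ↦ Or.inr (by positivity)).integrableOn_Ioc
  simp only [setAverage_eq, Real.volume_real_Ioc_of_le hab.le, smul_eq_mul,
    ← intervalIntegral.integral_of_le hab.le] at hjensen
  exact (Real.rpow_le_rpow (norm_nonneg _) hnorm (by positivity)).trans hjensen

end Slope

section UnitSpeedLoop

/-- `γ` is a closed `C¹` curve of length one, parametrized by arc length, with tangent `T`. -/
structure IsUnitSpeedLoop {E : Type*} [NormedAddCommGroup E] [NormedSpace ℝ E]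
    (γ T : ℝ → E) : Prop where
  hasDerivAt : ∀ s, HasDerivAt γ (T s) s
  continuous_tangent : Continuous T
  periodic : Function.Periodic γ 1
  norm_tangent : ∀ s, ‖T s‖ = 1

/-- The `k`-th cell `[k/n, (k+1)/n]` of the uniform grid of mesh `1/n` on the real line. -/
def gridCell (n : ℕ) (k : ℤ) : Set ℝ := Set.Icc ((k : ℝ) / n) (((k : ℝ) + 1) / n)

/-- The mean of the tangent of `γ` over the `k`-th cell of the grid of mesh `1/n`, written as a
difference quotient of `γ`. -/
noncomputable def meanTangent {E : Type*} [NormedAddCommGroup E] [NormedSpace ℝ E]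
    (γ : ℝ → E) (n : ℕ) (k : ℤ) : E :=
  slope γ ((k : ℝ) / n) (((k : ℝ) + 1) / n)

theorem div_lt_add_one_div {n : ℕ} (hn : 0 < n) (k : ℤ) :
    (k : ℝ) / n < ((k : ℝ) + 1) / n := by
  gcongr
  exact lt_add_one _

theorem abs_sub_le_of_mem_gridCell {n : ℕ} {k : ℤ} {u v : ℝ} (hu : u ∈ gridCell n k)
    (hv : v ∈ gridCell n k) : |u - v| ≤ 1 / n := by
  have hwidth : ((k : ℝ) + 1) / n - (k : ℝ) / n = 1 / n := by ring
  rw [← hwidth]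
  exact Real.dist_le_of_mem_Icc hu hv

theorem mem_gridCell_floor {n : ℕ} (hn : 0 < n) (u : ℝ) : u ∈ gridCell n ⌊(n : ℝ) * u⌋ := by
  have hn' : (0 : ℝ) < n := Nat.cast_pos.2 hn
  rw [gridCell, Set.mem_Icc, div_le_iff₀' hn', le_div_iff₀' hn']
  exact ⟨Int.floor_le _, (Int.lt_floor_add_one _).le⟩

section NormedSpace

variable {E : Type*} [NormedAddCommGroup E] [NormedSpace ℝ E] {γ T : ℝ → E} {n : ℕ}

theorem sum_range_meanTangent (n : ℕ) (γ : ℝ → E) (a : ℤ) (m : ℕ) :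
    ∑ k ∈ Finset.range m, meanTangent γ n (a + k) =
      (n : ℝ) • (γ ((a + m : ℝ) / n) - γ (a / n)) := by
  have hterm (k : ℕ) : meanTangent γ n (a + k) =
      (n : ℝ) • (γ ((a + (k + 1 : ℕ) : ℝ) / n) - γ ((a + k : ℝ) / n)) := by
    rw [meanTangent, slope, vsub_eq_sub]
    push_cast
    rw [← sub_div, add_sub_cancel_left, one_div, inv_inv, add_assoc]
  simp only [hterm, ← Finset.smul_sum]
  rw [Finset.sum_range_sub fun k : ℕ ↦ γ ((a + k : ℝ) / n)]
  simp

theorem meanTangent_periodic (hn : 0 < n) (hγ : Function.Periodic γ 1) :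
    Function.Periodic (meanTangent γ n) n := fun k ↦ by
  have hn' : (n : ℝ) ≠ 0 := by positivity
  have hleft : ((k + n : ℤ) : ℝ) / n = k / n + 1 := by push_cast; field_simp
  have hright : (((k + n : ℤ) : ℝ) + 1) / n = (k + 1) / n + 1 := by push_cast; field_simp; ring
  simp only [meanTangent, slope, hleft, hright, hγ _, add_sub_add_right_eq_sub]

namespace IsUnitSpeedLoop

theorem continuous (h : IsUnitSpeedLoop γ T) : Continuous γ :=
  continuous_iff_continuousAt.2 fun s ↦ (h.hasDerivAt s).continuousAt

theorem periodic_tangent (h : IsUnitSpeedLoop γ T) : Function.Periodic T 1 := fun s ↦ by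
  have hshift := (h.hasDerivAt (s + 1)).comp_add_const s 1
  rw [funext h.periodic] at hshift
  exact hshift.unique (h.hasDerivAt s)

theorem uniformContinuous_tangent (h : IsUnitSpeedLoop γ T) : UniformContinuous T :=
  uniformContinuous_of_periodic_one h.continuous_tangent h.periodic_tangent

theorem norm_meanTangent_le (h : IsUnitSpeedLoop γ T) (hn : 0 < n) (k : ℤ) :
    ‖meanTangent γ n k‖ ≤ 1 := by
  simpa [meanTangent] using norm_slope_sub_le h.hasDerivAt (div_lt_add_one_div hn k)
    (v := 0) (ε := 1) fun u _ ↦ by simp [h.norm_tangent]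

theorem eventually_norm_meanTangent_sub_le (h : IsUnitSpeedLoop γ T) {ε : ℝ} (hε : 0 < ε) :
    ∀ᶠ n : ℕ in atTop, ∀ k, ∀ u ∈ gridCell n k, ‖meanTangent γ n k - T u‖ ≤ ε := by
  obtain ⟨δ, hδ, hunif⟩ := Metric.uniformContinuous_iff.1 h.uniformContinuous_tangent ε hε
  filter_upwards [eventually_gt_atTop 0,
    tendsto_one_div_atTop_nhds_zero_nat.eventually (gt_mem_nhds hδ)] with n hn hnδ k u hu
  refine norm_slope_sub_le h.hasDerivAt (div_lt_add_one_div hn k) fun v hv ↦ ?_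
  rw [← dist_eq_norm]
  exact (hunif ((abs_sub_le_of_mem_gridCell hv hu).trans_lt hnδ)).le

theorem exists_half_mul_abs_sub_le (h : IsUnitSpeedLoop γ T) :
    ∃ δ > 0, ∀ s t, |t - s| < δ → 1 / 2 * |t - s| ≤ ‖γ t - γ s‖ := by
  obtain ⟨δ, hδ, hunif⟩ :=
    Metric.uniformContinuous_iff.1 h.uniformContinuous_tangent (1 / 2) (by norm_num)
  have hforward (s t : ℝ) (hst : s < t) (hδ' : t - s < δ) : 1 / 2 * (t - s) ≤ ‖γ t - γ s‖ := by
    have hclose : ‖slope γ s t - T s‖ ≤ 1 / 2 := norm_slope_sub_le h.hasDerivAt hst fun u hu ↦ by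
      rw [← dist_eq_norm]
      refine (hunif ?_).le
      rw [Real.dist_eq, abs_of_nonneg (sub_nonneg.2 hu.1)]
      linarith [hu.2]
    have hslope : 1 / 2 ≤ ‖slope γ s t‖ := by
      linarith [norm_sub_norm_le (T s) (slope γ s t), norm_sub_rev (T s) (slope γ s t),
        h.norm_tangent s]
    rw [← vsub_eq_sub (γ t), ← sub_smul_slope, norm_smul, Real.norm_of_nonneg (sub_pos.2 hst).le,
      mul_comm]
    gcongr
  refine ⟨δ, hδ, fun s t hst ↦ ?_⟩
  rcases lt_trichotomy s t with hlt | rfl | hgt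
  · rw [abs_of_pos (sub_pos.2 hlt)] at hst ⊢
    exact hforward s t hlt hst
  · simp
  · rw [abs_sub_comm, abs_of_pos (sub_pos.2 hgt)] at hst ⊢
    rw [norm_sub_rev]
    exact hforward t s hgt hst

end IsUnitSpeedLoop

theorem IsUnitSpeedLoop.exists_mul_iDist_le (h : IsUnitSpeedLoop γ T)
    (hinj : Set.InjOn γ (Set.Ico 0 1)) :
    ∃ c > 0, ∀ s t, c * iDist 1 s t ≤ ‖γ t - γ s‖ := by
  obtain ⟨δ, hδ, hnear⟩ := h.exists_half_mul_abs_sub_le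
  obtain ⟨m, hm, hfar⟩ := exists_pos_le_norm_sub_of_le_iDist h.continuous h.periodic hinj hδ
  refine ⟨min (1 / 2) m, by positivity, fun s t ↦ ?_⟩
  rcases lt_or_ge (iDist 1 s t) δ with hlt | hge
  · have hround : iDist 1 s t = |t - round (t - s) - s| := by
      rw [iDist_one_eq_norm, UnitAddCircle.norm_eq, sub_right_comm]
    have hper : γ (t - round (t - s)) = γ t := by
      simpa only [zsmul_one] using h.periodic.sub_zsmul_eq (round (t - s)) (x := t)
    rw [hround] at hlt ⊢
    rw [← hper]
    exact (mul_le_mul_of_nonneg_right (min_le_left _ _) (abs_nonneg _)).trans (hnear _ _ hlt)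
  · have hone : iDist 1 s t ≤ 1 := (iDist_one_le_half s t).trans (by norm_num)
    calc min (1 / 2) m * iDist 1 s t ≤ m * 1 :=
          mul_le_mul (min_le_right _ _) hone (iDist_one_nonneg s t) hm.le
      _ ≤ ‖γ t - γ s‖ := by simpa using hfar s t hge

end NormedSpace

end UnitSpeedLoop

section Closing

variable {E : Type*} [NormedAddCommGroup E]

theorem integral_norm_add_le_of_forall_gridCell {T : ℝ → E} (hT : Continuous T) {n : ℕ}
    (hn : 0 < n) {A : ℤ → E} {ε : ℝ} (hA : ∀ k, ∀ u ∈ gridCell n k, ‖A k - T u‖ ≤ ε) (c : E) :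
    ∫ s in (0 : ℝ)..1, ‖T s + c‖ ≤ (1 / n) * ∑ k ∈ Finset.range n, ‖A k + c‖ + ε := by
  have hn' : (n : ℝ) ≠ 0 := by positivity
  have hint (a b : ℝ) : IntervalIntegrable (fun s ↦ ‖T s + c‖) volume a b :=
    (hT.add continuous_const).norm.intervalIntegrable a b
  have hsum := intervalIntegral.sum_integral_adjacent_intervals (f := fun s ↦ ‖T s + c‖)
    (μ := volume) (a := fun k : ℕ ↦ (k : ℝ) / n) (n := n) fun k _ ↦ hint _ _
  have hcell (k : ℕ) : ∫ s in ((k : ℝ) / n)..(((k + 1 : ℕ) : ℝ) / n), ‖T s + c‖ ≤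
      (1 / n) * (‖A k + c‖ + ε) := by
    have hpoint : ∀ u ∈ Set.Icc ((k : ℝ) / n) (((k + 1 : ℕ) : ℝ) / n),
        ‖T u + c‖ ≤ ‖A k + c‖ + ε := fun u hu ↦ by
      have hclose := hA k u (by simpa [gridCell] using hu)
      have htri := norm_sub_norm_le (T u + c) (A k + c)
      rw [add_sub_add_right_eq_sub, norm_sub_rev] at htri
      linarith
    refine (intervalIntegral.integral_mono_on (by gcongr; simp) (hint _ _) (by simp)
      hpoint).trans_eq ?_
    rw [intervalIntegral.integral_const, smul_eq_mul, ← sub_div, Nat.cast_succ,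
      add_sub_cancel_left]
  rw [Nat.cast_zero, zero_div, div_self hn'] at hsum
  calc ∫ s in (0 : ℝ)..1, ‖T s + c‖
      ≤ ∑ k ∈ Finset.range n, (1 / n : ℝ) * (‖A k + c‖ + ε) :=
        hsum ▸ Finset.sum_le_sum fun k _ ↦ hcell k
    _ = (1 / n) * ∑ k ∈ Finset.range n, ‖A k + c‖ + ε := by
        rw [← Finset.mul_sum, Finset.sum_add_distrib, Finset.sum_const, Finset.card_range,
          nsmul_eq_mul]
        field_simp

variable [InnerProductSpace ℝ E] {γ T : ℝ → E}

-- `‖T + c‖ ≥ ⟪T + c, T⟫ = 1 + ⟪c, T⟫` and `⟪c, T⟫` has mean zero; by Rolle it vanishes somewhere,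
-- and there the inequality is strict.
theorem IsUnitSpeedLoop.one_lt_integral_norm_add (h : IsUnitSpeedLoop γ T) {c : E} (hc : c ≠ 0) :
    1 < ∫ s in (0 : ℝ)..1, ‖T s + c‖ := by
  have hT := h.continuous_tangent
  have hderiv (s : ℝ) : HasDerivAt (fun s ↦ inner ℝ c (γ s)) (inner ℝ c (T s)) s := by
    simpa using (hasDerivAt_const s c).inner ℝ (h.hasDerivAt s)
  have hclosed : γ 1 = γ 0 := by simpa using h.periodic 0
  have hint : ∫ s in (0 : ℝ)..1, (1 + inner ℝ c (T s)) = 1 := by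
    rw [intervalIntegral.integral_add (by simp)
      (Continuous.intervalIntegrable (by fun_prop) _ _),
      intervalIntegral.integral_eq_sub_of_hasDerivAt (fun s _ ↦ hderiv s)
      (Continuous.intervalIntegrable (by fun_prop) _ _), hclosed]
    simp
  obtain ⟨s₀, hs₀, horth⟩ := exists_hasDerivAt_eq_zero zero_lt_one
    (f := fun s ↦ inner ℝ c (γ s)) (fun s _ ↦ (hderiv s).continuousAt.continuousWithinAt)
    (by simp [hclosed]) fun s _ ↦ hderiv s
  refine hint.symm.trans_lt
    (intervalIntegral.integral_lt_integral_of_continuousOn_of_le_of_exists_lt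
      (f := fun s ↦ 1 + inner ℝ c (T s)) (g := fun s ↦ ‖T s + c‖) zero_lt_one
      (by fun_prop) (by fun_prop) (fun s _ ↦ ?_) ⟨s₀, Set.Ioo_subset_Icc_self hs₀, ?_⟩)
  · simpa [inner_add_left, h.norm_tangent] using real_inner_le_norm (T s + c) (T s)
  · have hsq : ‖T s₀ + c‖ ^ 2 = 1 + ‖c‖ ^ 2 := by
      rw [norm_add_sq_real, h.norm_tangent, real_inner_comm, horth]
      ring
    have hpos : 0 < ‖c‖ := norm_pos_iff.2 hc
    rw [horth, add_zero]
    nlinarith [norm_nonneg (T s₀ + c)]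

theorem IsUnitSpeedLoop.exists_one_lt_le_integral_norm_add [FiniteDimensional ℝ E]
    (h : IsUnitSpeedLoop γ T) {ρ : ℝ} (hρ : 0 < ρ) (R : ℝ) :
    ∃ M > 1, ∀ c : E, ρ ≤ ‖c‖ → ‖c‖ ≤ R → M ≤ ∫ s in (0 : ℝ)..1, ‖T s + c‖ := by
  have hT := h.continuous_tangent
  have hcont : Continuous fun c : E ↦ ∫ s in (0 : ℝ)..1, ‖T s + c‖ :=
    intervalIntegral.continuous_parametric_intervalIntegral_of_continuous' (by fun_prop) _ _
  have hcompact : IsCompact (Metric.closedBall (0 : E) R ∩ {c | ρ ≤ ‖c‖}) :=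
    (isCompact_closedBall 0 R).inter_right (isClosed_le continuous_const continuous_norm)
  obtain ⟨M, hM, hle⟩ := hcompact.exists_forall_le' hcont.continuousOn fun c hc ↦
    h.one_lt_integral_norm_add (norm_pos_iff.1 (hρ.trans_le hc.2))
  exact ⟨M, hM, fun c hρc hcR ↦ hle c ⟨by simpa using hcR, hρc⟩⟩

theorem IsUnitSpeedLoop.tendsto_zero_of_isMinOn [FiniteDimensional ℝ E]
    (h : IsUnitSpeedLoop γ T) {R : ℝ} {c : ℕ → E} (hcR : ∀ n, c n ∈ Metric.closedBall 0 R)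
    (hmin : ∀ n, IsMinOn (fun c ↦ ∑ k ∈ Finset.range n, ‖meanTangent γ n k + c‖)
      (Metric.closedBall 0 R) (c n)) :
    Tendsto c atTop (nhds 0) := by
  rw [Metric.tendsto_nhds]
  intro ρ hρ
  obtain ⟨M, hM, hgap⟩ := h.exists_one_lt_le_integral_norm_add hρ R
  filter_upwards [h.eventually_norm_meanTangent_sub_le (half_pos (sub_pos.2 hM)),
    eventually_gt_atTop 0] with n hclose hn
  have hn' : (0 : ℝ) < n := Nat.cast_pos.2 hn
  rw [dist_zero_right]
  by_contra! hfar
  have hcR' : ‖c n‖ ≤ R := by simpa using hcR n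
  have hlower := (hgap (c n) hfar hcR').trans
    (integral_norm_add_le_of_forall_gridCell h.continuous_tangent hn hclose (c n))
  have hupper : ∑ k ∈ Finset.range n, ‖meanTangent γ n k + c n‖ ≤ n :=
    calc _ ≤ ∑ k ∈ Finset.range n, ‖meanTangent γ n k + 0‖ :=
          hmin n (Metric.mem_closedBall_self ((norm_nonneg _).trans hcR'))
      _ ≤ ∑ k ∈ Finset.range n, 1 := by
          gcongr with k
          simpa using h.norm_meanTangent_le hn k
      _ = n := by simp
  have hmean : (1 / n : ℝ) * ∑ k ∈ Finset.range n, ‖meanTangent γ n k + c n‖ ≤ 1 := by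
    rwa [one_div, inv_mul_le_iff₀ hn', mul_one]
  linarith

theorem IsUnitSpeedLoop.eventually_norm_meanTangent_add_sub_le (h : IsUnitSpeedLoop γ T)
    {c : ℕ → E} (hc : Tendsto c atTop (nhds 0)) {ε : ℝ} (hε : 0 < ε) :
    ∀ᶠ n : ℕ in atTop, ∀ k, ∀ u ∈ gridCell n k, ‖meanTangent γ n k + c n - T u‖ ≤ ε := by
  filter_upwards [h.eventually_norm_meanTangent_sub_le (half_pos hε),
    Metric.tendsto_nhds.1 hc (ε / 2) (half_pos hε)] with n hclose hcn k u hu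
  rw [dist_zero_right] at hcn
  rw [add_sub_right_comm]
  linarith [norm_add_le (meanTangent γ n k - T u) (c n), hclose k u hu]

theorem IsUnitSpeedLoop.eventually_meanTangent_add_ne_zero (h : IsUnitSpeedLoop γ T)
    {c : ℕ → E} (hc : Tendsto c atTop (nhds 0)) :
    ∀ᶠ n : ℕ in atTop, ∀ k, meanTangent γ n k + c n ≠ 0 := by
  filter_upwards [h.eventually_norm_meanTangent_add_sub_le hc one_half_pos,
    eventually_gt_atTop 0] with n hclose hn k hzero
  have hdist := hclose k (k / n) (Set.left_mem_Icc.2 (div_lt_add_one_div hn k).le)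
  rw [hzero, zero_sub, norm_neg, h.norm_tangent] at hdist
  norm_num at hdist

theorem IsUnitSpeedLoop.exists_tendsto_zero_sum_normalize_eq_zero [FiniteDimensional ℝ E]
    (h : IsUnitSpeedLoop γ T) :
    ∃ c : ℕ → E, Tendsto c atTop (nhds 0) ∧ ∀ᶠ n : ℕ in atTop,
      ∑ k ∈ Finset.range n, NormedSpace.normalize (meanTangent γ n k + c n) = 0 := by
  choose c hcR hmin using fun n : ℕ ↦
    (isCompact_closedBall (0 : E) 1).exists_isMinOn (Metric.nonempty_closedBall.2 zero_le_one)
      (f := fun c ↦ ∑ k ∈ Finset.range n, ‖meanTangent γ n k + c‖) (by fun_prop)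
  have hc := h.tendsto_zero_of_isMinOn hcR hmin
  refine ⟨c, hc, ?_⟩
  filter_upwards [h.eventually_meanTangent_add_ne_zero hc,
    hc.eventually (Metric.ball_mem_nhds 0 one_pos)] with n hne hball
  exact sum_normalize_eq_zero_of_isLocalMin (fun k _ ↦ hne k)
    ((hmin n).isLocalMin (mem_of_superset (Metric.isOpen_ball.mem_nhds hball)
      Metric.ball_subset_closedBall))

end Closing

section Polygons

/-- `p` is the arc-length parametrization of a closed equilateral polygon of length one with `n`
edges, its vertices being `p (i / n)` and `B i` being the direction of the edge over the `i`-th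
grid cell. -/
structure IsEquilateralPolygon {E : Type*} [NormedAddCommGroup E] [NormedSpace ℝ E]
    (n : ℕ) (B : ℤ → E) (p : ℝ → E) : Prop where
  periodic : Function.Periodic p 1
  norm_edge : ∀ i, ‖B i‖ = 1
  affine : ∀ i, ∀ u ∈ gridCell n i, p u = p (i / n) + (u - i / n) • B i

/-- `B` is an `n`-periodic family of unit vectors, `n` consecutive of which sum to zero, that is,
the edge directions of a closed equilateral polygon with `n` edges. -/
structure IsClosedUnitEdges {E : Type*} [NormedAddCommGroup E] (n : ℕ) (B : ℤ → E) : Prop where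
  norm_eq_one : ∀ k, ‖B k‖ = 1
  periodic : Function.Periodic B n
  sum_eq_zero : ∑ k ∈ Finset.range n, B k = 0

/-- The polygonal path of unit speed through `x₀` whose edge over the `k`-th grid cell has
direction `B k`. -/
noncomputable def polygonalPath {E : Type*} [NormedAddCommGroup E] [NormedSpace ℝ E]
    (n : ℕ) (B : ℤ → E) (x₀ : E) (u : ℝ) : E :=
  x₀ + ∫ v in (0 : ℝ)..u, B ⌊(n : ℝ) * v⌋

variable {E : Type*} [NormedAddCommGroup E]

theorem intervalIntegrable_comp_floor_mul {B : ℤ → E} {C : ℝ} (hB : ∀ k, ‖B k‖ ≤ C) (n : ℕ)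
    (a b : ℝ) : IntervalIntegrable (fun v : ℝ ↦ B ⌊(n : ℝ) * v⌋) volume a b := by
  have hmeas : StronglyMeasurable fun v : ℝ ↦ B ⌊(n : ℝ) * v⌋ :=
    (StronglyMeasurable.of_discrete (f := B)).comp_measurable
      (Int.measurable_floor.comp (measurable_const.mul measurable_id))
  exact intervalIntegrable_iff.2 (Measure.integrableOn_of_bounded (by simp [Set.uIoc])
    hmeas.aestronglyMeasurable (Eventually.of_forall fun v ↦ hB _))

variable {n : ℕ} {B : ℤ → E}

theorem integral_comp_floor_mul_of_mem_gridCell [NormedSpace ℝ E] [CompleteSpace E] (hn : 0 < n)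
    (B : ℤ → E) {i : ℤ} {u : ℝ} (hu : u ∈ gridCell n i) :
    ∫ v in (i / n : ℝ)..u, B ⌊(n : ℝ) * v⌋ = (u - i / n) • B i := by
  have hn' : (0 : ℝ) < n := Nat.cast_pos.2 hn
  rw [intervalIntegral.integral_congr_Ioo_of_le (g := fun _ ↦ B i) hu.1,
    intervalIntegral.integral_const]
  intro v hv
  have hfloor : ⌊(n : ℝ) * v⌋ = i := Int.floor_eq_iff.2
    ⟨((div_lt_iff₀' hn').1 hv.1).le, (lt_div_iff₀' hn').1 (hv.2.trans_le hu.2)⟩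
  simp only [hfloor]

namespace IsClosedUnitEdges

variable [NormedSpace ℝ E] [CompleteSpace E]

theorem integral_comp_floor_mul_eq_zero (h : IsClosedUnitEdges n B) (hn : 0 < n) :
    ∫ v in (0 : ℝ)..1, B ⌊(n : ℝ) * v⌋ = 0 := by
  have hsum := intervalIntegral.sum_integral_adjacent_intervals (μ := volume)
    (f := fun v : ℝ ↦ B ⌊(n : ℝ) * v⌋) (a := fun k : ℕ ↦ (k : ℝ) / n) (n := n)
    fun k _ ↦ intervalIntegrable_comp_floor_mul (fun k ↦ (h.norm_eq_one k).le) n _ _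
  have hcell (k : ℕ) : ∫ v in (k / n : ℝ)..((k + 1 : ℕ) / n : ℝ), B ⌊(n : ℝ) * v⌋ =
      (1 / n : ℝ) • B k := by
    have hright := Set.right_mem_Icc.2 (div_lt_add_one_div hn k).le
    have hint := integral_comp_floor_mul_of_mem_gridCell hn B hright
    rw [← sub_div, add_sub_cancel_left] at hint
    simpa using hint
  have hn' : (n : ℝ) ≠ 0 := by positivity
  rw [Nat.cast_zero, zero_div, div_self hn', Finset.sum_congr rfl fun k _ ↦ hcell k,
    ← Finset.smul_sum, h.sum_eq_zero, smul_zero] at hsum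
  exact hsum.symm

theorem polygonalPath_periodic (h : IsClosedUnitEdges n B) (hn : 0 < n) (x₀ : E) :
    Function.Periodic (polygonalPath n B x₀) 1 := fun u ↦ by
  have hint := intervalIntegrable_comp_floor_mul (fun k ↦ (h.norm_eq_one k).le) n
  have hstep : Function.Periodic (fun v : ℝ ↦ B ⌊(n : ℝ) * v⌋) 1 := fun v ↦ by
    simp only [mul_add, mul_one, Int.floor_add_natCast, h.periodic _]
  rw [polygonalPath, polygonalPath,
    ← intervalIntegral.integral_add_adjacent_intervals (hint 0 u) (hint u (u + 1)),
    hstep.intervalIntegral_add_eq u 0, zero_add, h.integral_comp_floor_mul_eq_zero hn, add_zero]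

theorem isEquilateralPolygon_polygonalPath (h : IsClosedUnitEdges n B) (hn : 0 < n) (x₀ : E) :
    IsEquilateralPolygon n B (polygonalPath n B x₀) where
  periodic := h.polygonalPath_periodic hn x₀
  norm_edge := h.norm_eq_one
  affine i u hu := by
    have hint := intervalIntegrable_comp_floor_mul (fun k ↦ (h.norm_eq_one k).le) n
    rw [← integral_comp_floor_mul_of_mem_gridCell hn B hu, polygonalPath, polygonalPath, add_assoc,
      intervalIntegral.integral_add_adjacent_intervals (hint _ _) (hint _ _)]

theorem norm_polygonalPath_sub_le {γ T : ℝ → E} (h : IsClosedUnitEdges n B)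
    (hγ : IsUnitSpeedLoop γ T) (hn : 0 < n) {ε : ℝ}
    (hclose : ∀ k, ∀ u ∈ gridCell n k, ‖B k - T u‖ ≤ ε) (u : ℝ) :
    ‖polygonalPath n B (γ 0) u - γ u‖ ≤ ε := by
  have hT := hγ.continuous_tangent.intervalIntegrable (μ := volume)
  have hint := intervalIntegrable_comp_floor_mul (fun k ↦ (h.norm_eq_one k).le) n
  have hdiff : polygonalPath n B (γ 0) (Int.fract u) - γ (Int.fract u) =
      ∫ v in (0 : ℝ)..Int.fract u, (B ⌊(n : ℝ) * v⌋ - T v) := by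
    rw [intervalIntegral.integral_sub (hint _ _) (hT _ _),
      intervalIntegral.integral_eq_sub_of_hasDerivAt (fun s _ ↦ hγ.hasDerivAt s) (hT _ _),
      polygonalPath]
    abel
  have hε : 0 ≤ ε := (norm_nonneg _).trans (hclose _ 0 (mem_gridCell_floor hn 0))
  rw [← periodic_one_map_fract hγ.periodic u,
    ← periodic_one_map_fract (h.polygonalPath_periodic hn (γ 0)) u, hdiff]
  calc _ ≤ ε * |Int.fract u - 0| := intervalIntegral.norm_integral_le_of_norm_le_const
          fun v _ ↦ hclose _ v (mem_gridCell_floor hn v)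
    _ ≤ ε := by
      rw [sub_zero, abs_of_nonneg (Int.fract_nonneg u)]
      exact mul_le_of_le_one_right hε (Int.fract_lt_one u).le

end IsClosedUnitEdges

namespace IsEquilateralPolygon

variable [NormedSpace ℝ E] {p : ℝ → E}

theorem chord_eq (h : IsEquilateralPolygon n B p) (hn : 0 < n) (a : ℤ) (m : ℕ) :
    p ((a + m : ℝ) / n) - p (a / n) = (1 / n : ℝ) • ∑ k ∈ Finset.range m, B (a + k) := by
  induction m with
  | zero => simp
  | succ m ih =>
    have hedge := h.affine (a + m) _ (Set.right_mem_Icc.2 (div_lt_add_one_div hn (a + m)).le)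
    rw [← sub_div, add_sub_cancel_left, Int.cast_add, Int.cast_natCast, add_assoc,
      ← Nat.cast_succ] at hedge
    rw [hedge, Finset.sum_range_succ, smul_add, ← ih]
    abel

theorem norm_chord_le (h : IsEquilateralPolygon n B p) (hn : 0 < n) (a : ℤ) (m : ℕ) :
    ‖p ((a + m : ℝ) / n) - p (a / n)‖ ≤ m / n := by
  rw [h.chord_eq hn, norm_smul, Real.norm_of_nonneg (by positivity), one_div, div_eq_inv_mul]
  gcongr
  simpa [h.norm_edge] using norm_sum_le (Finset.range m) fun k : ℕ ↦ B (a + k)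

theorem norm_edge_chord (h : IsEquilateralPolygon n B p) (hn : 0 < n) (a : ℤ) :
    ‖p ((a + 1 : ℝ) / n) - p (a / n)‖ = 1 / n := by
  simpa [norm_smul, h.norm_edge] using congrArg norm (h.chord_eq hn a 1)

theorem half_mul_le_norm_chord {γ T : ℝ → E} (h : IsEquilateralPolygon n B p) (hn : 0 < n)
    (hγ : IsUnitSpeedLoop γ T) {c : ℝ} (hbilip : ∀ s t, c * iDist 1 s t ≤ ‖γ t - γ s‖)
    (hclose : ∀ k, ∀ u ∈ gridCell n k, ‖B k - T u‖ ≤ c / 2) (a : ℤ) {m : ℕ} (hm : 2 * m ≤ n) :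
    c / 2 * (m / n) ≤ ‖p ((a + m : ℝ) / n) - p (a / n)‖ := by
  have hn' : (0 : ℝ) < n := Nat.cast_pos.2 hn
  have hγchord : γ ((a + m : ℝ) / n) - γ (a / n) =
      (1 / n : ℝ) • ∑ k ∈ Finset.range m, meanTangent γ n (a + k) := by
    rw [sum_range_meanTangent, smul_smul, one_div_mul_cancel hn'.ne', one_smul]
  have hdiff : ‖(γ ((a + m : ℝ) / n) - γ (a / n)) - (p ((a + m : ℝ) / n) - p (a / n))‖ ≤
      c / 2 * (m / n) := by
    have hsum : ‖∑ k ∈ Finset.range m, (meanTangent γ n (a + k) - B (a + k))‖ ≤ m * (c / 2) := by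
      refine (norm_sum_le_of_le (n := fun _ ↦ c / 2) _ fun k _ ↦ ?_).trans_eq (by simp)
      exact norm_slope_sub_le hγ.hasDerivAt (div_lt_add_one_div hn _) fun u hu ↦ by
        rw [norm_sub_rev]
        exact hclose _ u hu
    rw [hγchord, h.chord_eq hn, ← smul_sub, ← Finset.sum_sub_distrib, norm_smul,
      Real.norm_of_nonneg (by positivity), one_div, inv_mul_le_iff₀ hn']
    exact hsum.trans_eq (by field_simp)
  have hlower := hbilip (a / n) ((a + m : ℝ) / n)
  rw [iDist_one_div_add_div hn a hm] at hlower
  linarith [norm_sub_norm_le (γ ((a + m : ℝ) / n) - γ (a / n)) (p ((a + m : ℝ) / n) - p (a / n))]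

end IsEquilateralPolygon

variable [InnerProductSpace ℝ E]

theorem nonempty_linearIsometry_complex [FiniteDimensional ℝ E] (hE : 2 ≤ Module.finrank ℝ E) :
    Nonempty (ℂ →ₗᵢ[ℝ] E) := by
  have hv := (stdOrthonormalBasis ℝ E).orthonormal.comp (Fin.castLE hE) (Fin.castLE_injective hE)
  let f : ℂ →ₗ[ℝ] E := Complex.basisOneI.constr ℝ (stdOrthonormalBasis ℝ E ∘ Fin.castLE hE)
  have hf : f ∘ Complex.basisOneI = stdOrthonormalBasis ℝ E ∘ Fin.castLE hE :=
    funext fun i ↦ Complex.basisOneI.constr_basis ℝ _ i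
  have hone : Orthonormal ℝ Complex.basisOneI := by
    rw [← Complex.toBasis_orthonormalBasisOneI, OrthonormalBasis.coe_toBasis]
    exact Complex.orthonormalBasisOneI.orthonormal
  exact ⟨f.isometryOfOrthonormal hone (hf ▸ hv)⟩

theorem exists_isClosedUnitEdges [FiniteDimensional ℝ E] (hE : 2 ≤ Module.finrank ℝ E)
    (hn : 2 ≤ n) : ∃ B : ℤ → E, IsClosedUnitEdges n B := by
  obtain ⟨φ⟩ := nonempty_linearIsometry_complex hE
  have hζ := Complex.isPrimitiveRoot_exp n (by omega)
  set ζ := Complex.exp (2 * π * Complex.I / n)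
  refine ⟨fun k ↦ φ (ζ ^ k), fun k ↦ ?_, fun k ↦ ?_, ?_⟩
  · rw [φ.norm_map, norm_zpow, hζ.norm'_eq_one (by omega), one_zpow]
  · simp only [zpow_add₀ (hζ.ne_zero (by omega)), zpow_natCast, hζ.pow_eq_one, mul_one]
  · simp only [zpow_natCast, ← map_sum, hζ.geom_sum_eq_zero hn, map_zero]

end Polygons

section ApproximatingPolygons

variable {E : Type*} [NormedAddCommGroup E] [InnerProductSpace ℝ E] {γ T : ℝ → E}

theorem IsUnitSpeedLoop.eventually_norm_normalize_sub_le (h : IsUnitSpeedLoop γ T)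
    {c : ℕ → E} (hc : Tendsto c atTop (nhds 0)) {ε : ℝ} (hε : 0 < ε) :
    ∀ᶠ n : ℕ in atTop, ∀ k, ∀ u ∈ gridCell n k,
      ‖NormedSpace.normalize (meanTangent γ n k + c n) - T u‖ ≤ ε := by
  filter_upwards [h.eventually_norm_meanTangent_add_sub_le hc (half_pos hε),
    h.eventually_meanTangent_add_ne_zero hc] with n hclose hne k u hu
  have hT : T u ≠ 0 := norm_ne_zero_iff.1 (by simp [h.norm_tangent])
  have hnormalize := norm_normalize_sub_normalize_le (hne k) hT
  rw [NormedSpace.normalize_eq_self_of_norm_eq_one (h.norm_tangent u), h.norm_tangent,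
    div_one] at hnormalize
  linarith [hclose k u hu]

theorem IsUnitSpeedLoop.eventually_isClosedUnitEdges (h : IsUnitSpeedLoop γ T) {c : ℕ → E}
    (hc : Tendsto c atTop (nhds 0)) (hsum : ∀ᶠ n : ℕ in atTop,
      ∑ k ∈ Finset.range n, NormedSpace.normalize (meanTangent γ n k + c n) = 0) :
    ∀ᶠ n : ℕ in atTop,
      IsClosedUnitEdges n fun k ↦ NormedSpace.normalize (meanTangent γ n k + c n) := by
  filter_upwards [eventually_gt_atTop 0, hsum, h.eventually_meanTangent_add_ne_zero hc]
    with n hn hzero hne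
  exact ⟨fun k ↦ NormedSpace.norm_normalize (hne k), fun k ↦ by
    rw [meanTangent_periodic hn h.periodic], hzero⟩

/-- Equilateral polygons `p n` approximating `γ`, whose edge directions `B n` are eventually the
normalized mean tangents of `γ`, shifted by a small vector `c n` that makes the polygon close. -/
structure IsApproximatingPolygons (γ T : ℝ → E) (c : ℕ → E) (B : ℕ → ℤ → E) (p : ℕ → ℝ → E) :
    Prop where
  isEquilateralPolygon : ∀ n ≥ 3, IsEquilateralPolygon n (B n) (p n)
  tendsto_shift : Tendsto c atTop (nhds 0)
  eventually_edge_eq : ∀ᶠ n : ℕ in atTop, ∀ k,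
    B n k = NormedSpace.normalize (meanTangent γ n k + c n)
  eventually_norm_edge_sub_le : ∀ ε > 0, ∀ᶠ n : ℕ in atTop, ∀ k, ∀ u ∈ gridCell n k,
    ‖B n k - T u‖ ≤ ε
  eventually_norm_sub_le : ∀ ε > 0, ∀ᶠ n : ℕ in atTop, ∀ u, ‖p n u - γ u‖ ≤ ε

theorem IsUnitSpeedLoop.exists_isApproximatingPolygons [FiniteDimensional ℝ E]
    (h : IsUnitSpeedLoop γ T) (hE : 2 ≤ Module.finrank ℝ E) :
    ∃ c B p, IsApproximatingPolygons γ T c B p := by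
  obtain ⟨c, hc, hsum⟩ := h.exists_tendsto_zero_sum_normalize_eq_zero
  have hclosed := h.eventually_isClosedUnitEdges hc hsum
  have hedges (n : ℕ) : ∃ B : ℤ → E, (2 ≤ n → IsClosedUnitEdges n B) ∧
      (IsClosedUnitEdges n (fun k ↦ NormedSpace.normalize (meanTangent γ n k + c n)) →
        ∀ k, B k = NormedSpace.normalize (meanTangent γ n k + c n)) := by
    by_cases hn : IsClosedUnitEdges n fun k ↦ NormedSpace.normalize (meanTangent γ n k + c n)
    · exact ⟨_, fun _ ↦ hn, fun _ _ ↦ rfl⟩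
    · by_cases hn2 : 2 ≤ n
      · obtain ⟨B, hB⟩ := exists_isClosedUnitEdges hE hn2
        exact ⟨B, fun _ ↦ hB, fun hn' ↦ absurd hn' hn⟩
      · exact ⟨0, fun hn2' ↦ absurd hn2' hn2, fun hn' ↦ absurd hn' hn⟩
  choose B hB hBeq using hedges
  have heq := hclosed.mono fun n hn ↦ hBeq n hn
  have hnear (ε : ℝ) (hε : ε > 0) : ∀ᶠ n : ℕ in atTop, ∀ k, ∀ u ∈ gridCell n k,
      ‖B n k - T u‖ ≤ ε := by
    filter_upwards [heq, h.eventually_norm_normalize_sub_le hc hε] with n hBn hclose k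
    rw [hBn]
    exact hclose k
  refine ⟨c, B, fun n ↦ polygonalPath n (B n) (γ 0), fun n hn ↦
    (hB n (by omega)).isEquilateralPolygon_polygonalPath (by omega) _, hc, heq, hnear,
    fun ε hε ↦ ?_⟩
  filter_upwards [hnear ε hε, eventually_ge_atTop 2] with n hclose hn u
  exact (hB n hn).norm_polygonalPath_sub_le h (by omega) hclose u

end ApproximatingPolygons

section EnergyDensity

/-- The integrand of the O'Hara energy of a closed curve of length one. -/
noncomputable def oharaDensity {E : Type*} [NormedAddCommGroup E] (α q : ℝ) (γ : ℝ → E)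
    (s t : ℝ) : ℝ :=
  (‖γ t - γ s‖ ^ (-α) - iDist 1 s t ^ (-α)) ^ q

variable {E : Type*} [NormedAddCommGroup E] {α q : ℝ} {γ : ℝ → E}

theorem oharaDensity_comm (α q : ℝ) (γ : ℝ → E) (s t : ℝ) :
    oharaDensity α q γ s t = oharaDensity α q γ t s := by
  rw [oharaDensity, oharaDensity, norm_sub_rev, iDist_one_comm]

theorem oharaDensity_periodic_right (hγ : Function.Periodic γ 1) (s : ℝ) :
    Function.Periodic (oharaDensity α q γ s) 1 := fun t ↦ by
  rw [oharaDensity, oharaDensity, hγ, iDist_one_periodic_right]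

theorem oharaDensity_eq_zero_of_norm_eq_iDist (hq : q ≠ 0) {s t : ℝ}
    (h : ‖γ t - γ s‖ = iDist 1 s t) : oharaDensity α q γ s t = 0 := by
  rw [oharaDensity, h, sub_self, zero_rpow hq]

theorem oharaDensity_self (hq : q ≠ 0) (α : ℝ) (γ : ℝ → E) (s : ℝ) :
    oharaDensity α q γ s s = 0 :=
  oharaDensity_eq_zero_of_norm_eq_iDist hq (by simp [iDist_one_eq_norm])

theorem oharaDensity_nonneg (hα : 0 ≤ α) {s t : ℝ} (hpos : 0 < ‖γ t - γ s‖)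
    (hle : ‖γ t - γ s‖ ≤ iDist 1 s t) : 0 ≤ oharaDensity α q γ s t :=
  rpow_nonneg (sub_nonneg.2 (rpow_le_rpow_of_nonpos hpos hle (neg_nonpos.2 hα))) _

end EnergyDensity

section ArcEstimate

theorem one_sub_rpow_neg_le {t α : ℝ} (ht : 0 < t) (hα : 0 ≤ α) :
    1 - t ^ (-α) ≤ α * (t - 1) := by
  have hexp : 1 - α * log t ≤ t ^ (-α) := by
    rw [rpow_def_of_pos ht]
    linarith [add_one_le_exp (log t * -α)]
  linarith [mul_le_mul_of_nonneg_left (log_le_sub_one_of_pos ht) hα]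

theorem rpow_neg_sub_rpow_neg_le {α κ ρ x : ℝ} (hα : 0 ≤ α) (hκ : 0 < κ) (hx : 0 < x)
    (hκρ : κ * x ≤ ρ) (hρx : ρ ≤ x) :
    ρ ^ (-α) - x ^ (-α) ≤ α * κ ^ (-α - 1) * x ^ (-α - 1) * (x - ρ) := by
  have hρ : 0 < ρ := (mul_pos hκ hx).trans_le hκρ
  calc ρ ^ (-α) - x ^ (-α) = ρ ^ (-α) * (1 - (x / ρ) ^ (-α)) := by
        rw [div_rpow hx.le hρ.le]
        field_simp
    _ ≤ ρ ^ (-α) * (α * (x / ρ - 1)) := by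
        gcongr
        exact one_sub_rpow_neg_le (div_pos hx hρ) hα
    _ = α * ρ ^ (-α - 1) * (x - ρ) := by
        rw [rpow_sub_one hρ.ne']
        field_simp
    _ ≤ α * (κ * x) ^ (-α - 1) * (x - ρ) := by
        have hanti := rpow_le_rpow_of_nonpos (mul_pos hκ hx) hκρ (by linarith : -α - 1 ≤ 0)
        exact mul_le_mul_of_nonneg_right (mul_le_mul_of_nonneg_left hanti hα)
          (sub_nonneg.2 hρx)
    _ = α * κ ^ (-α - 1) * x ^ (-α - 1) * (x - ρ) := by
        rw [mul_rpow hκ.le hx.le, ← mul_assoc]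

variable {E : Type*} [NormedAddCommGroup E]

theorem norm_normalize_add_sub_normalize_add_le [NormedSpace ℝ E] {x v c : E} (hx : x + c ≠ 0)
    (hv : ‖v‖ = 1) (hc : ‖c‖ ≤ 1 / 2) :
    ‖NormedSpace.normalize (x + c) - NormedSpace.normalize (v + c)‖ ≤ 4 * ‖x - v‖ := by
  have hvc : 1 / 2 ≤ ‖v + c‖ := by linarith [norm_sub_le_norm_add v c]
  have hvc0 : v + c ≠ 0 := norm_pos_iff.1 (by linarith)
  have hnormalize := norm_normalize_sub_normalize_le hx hvc0
  rw [add_sub_add_right_eq_sub] at hnormalize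
  refine hnormalize.trans ((div_le_iff₀ (norm_pos_iff.2 hvc0)).2 ?_)
  nlinarith [norm_nonneg (x - v)]

theorem IsUnitSpeedLoop.sum_norm_meanTangent_sub_rpow_le [NormedSpace ℝ E] [CompleteSpace E]
    {γ T : ℝ → E} (h : IsUnitSpeedLoop γ T) {n : ℕ} (hn : 0 < n) {r : ℝ} (hr : 1 ≤ r) (v : E)
    (a : ℤ) (m : ℕ) :
    ∑ k ∈ Finset.range m, ‖meanTangent γ n (a + k) - v‖ ^ r ≤
      n * ∫ u in (a / n : ℝ)..((a + m) / n : ℝ), ‖T u - v‖ ^ r := by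
  have hcont : Continuous fun u ↦ ‖T u - v‖ ^ r :=
    (h.continuous_tangent.sub continuous_const).norm.rpow_const fun _ ↦ Or.inr (by linarith)
  have hsum := intervalIntegral.sum_integral_adjacent_intervals (μ := volume)
    (f := fun u ↦ ‖T u - v‖ ^ r) (a := fun k : ℕ ↦ (a + k : ℝ) / n) (n := m)
    fun k _ ↦ hcont.intervalIntegrable _ _
  rw [Nat.cast_zero, add_zero] at hsum
  rw [← hsum, Finset.mul_sum]
  refine Finset.sum_le_sum fun k _ ↦ ?_
  have hjensen := norm_slope_sub_rpow_le h.hasDerivAt h.continuous_tangent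
    (div_lt_add_one_div hn (a + k)) v hr
  rw [← sub_div, add_sub_cancel_left, one_div, inv_inv] at hjensen
  simpa [meanTangent, add_assoc] using hjensen

namespace IsEquilateralPolygon

variable [InnerProductSpace ℝ E] {n : ℕ} {B : ℤ → E} {p γ T : ℝ → E} {c v : E}

theorem sub_norm_chord_le (h : IsEquilateralPolygon n B p) (hn : 0 < n)
    (hB : ∀ k, B k = NormedSpace.normalize (meanTangent γ n k + c)) (hc : ‖c‖ ≤ 1 / 2)
    (hv : ‖v‖ = 1) (a : ℤ) (m : ℕ) :
    m / n - ‖p ((a + m : ℝ) / n) - p (a / n)‖ ≤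
      8 / n * ∑ k ∈ Finset.range m, ‖meanTangent γ n (a + k) - v‖ ^ 2 := by
  have hvc : v + c ≠ 0 := norm_pos_iff.1 (by linarith [norm_sub_le_norm_add v c])
  have hdefect := card_sub_norm_sum_le (s := Finset.range m) (b := fun k : ℕ ↦ B (a + k))
    (fun _ _ ↦ h.norm_edge _) (NormedSpace.norm_normalize hvc)
  have hedge (k : ℕ) : ‖B (a + k) - NormedSpace.normalize (v + c)‖ ^ 2 ≤
      16 * ‖meanTangent γ n (a + k) - v‖ ^ 2 := by
    have hne : meanTangent γ n (a + k) + c ≠ 0 := fun hzero ↦ by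
      simpa [hB, hzero] using h.norm_edge (a + k)
    rw [hB]
    calc _ ≤ (4 * ‖meanTangent γ n (a + k) - v‖) ^ 2 := by
          gcongr
          exact norm_normalize_add_sub_normalize_add_le hne hv hc
      _ = _ := by ring
  have hsum := Finset.sum_le_sum fun k (_ : k ∈ Finset.range m) ↦ hedge k
  rw [← Finset.mul_sum] at hsum
  rw [Finset.card_range] at hdefect
  rw [h.chord_eq hn, norm_smul, Real.norm_of_nonneg (by positivity), one_div, div_eq_inv_mul,
    div_eq_inv_mul, ← mul_sub, mul_assoc]
  gcongr
  linarith

theorem sub_norm_chord_rpow_le [CompleteSpace E] (h : IsEquilateralPolygon n B p) (hn : 0 < n)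
    (hγ : IsUnitSpeedLoop γ T) (hB : ∀ k, B k = NormedSpace.normalize (meanTangent γ n k + c))
    (hc : ‖c‖ ≤ 1 / 2) (hv : ‖v‖ = 1) {q : ℝ} (hq : 1 ≤ q) (a : ℤ) {m : ℕ} (hm : 0 < m) :
    (m / n - ‖p ((a + m : ℝ) / n) - p (a / n)‖) ^ q ≤
      8 ^ q * (m / n) ^ (q - 1) *
        ∫ u in (a / n : ℝ)..((a + m) / n : ℝ), ‖T u - v‖ ^ (2 * q) := by
  have hn' : (0 : ℝ) < n := Nat.cast_pos.2 hn
  have hm' : (0 : ℝ) < m := Nat.cast_pos.2 hm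
  have hjensen := rpow_sum_le_const_mul_sum_rpow_of_nonneg (s := Finset.range m)
    (f := fun k : ℕ ↦ ‖meanTangent γ n (a + k) - v‖ ^ 2) hq fun _ _ ↦ sq_nonneg _
  simp only [← rpow_natCast_mul (norm_nonneg _), Finset.card_range, Nat.cast_ofNat] at hjensen
  calc _ ≤ (8 / n * ∑ k ∈ Finset.range m, ‖meanTangent γ n (a + k) - v‖ ^ 2) ^ q :=
        rpow_le_rpow (sub_nonneg.2 (h.norm_chord_le hn a m))
          (h.sub_norm_chord_le hn hB hc hv a m) (by linarith)
    _ = (8 / n) ^ q * (∑ k ∈ Finset.range m, ‖meanTangent γ n (a + k) - v‖ ^ 2) ^ q :=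
        mul_rpow (by positivity) (Finset.sum_nonneg fun _ _ ↦ sq_nonneg _)
    _ ≤ (8 / n) ^ q * (m ^ (q - 1) * (n *
          ∫ u in (a / n : ℝ)..((a + m) / n : ℝ), ‖T u - v‖ ^ (2 * q))) := by
        gcongr
        refine hjensen.trans ?_
        gcongr
        exact hγ.sum_norm_meanTangent_sub_rpow_le hn (by linarith) v a m
    _ = _ := by
        rw [div_rpow (by norm_num) hn'.le, div_rpow hm'.le hn'.le, rpow_sub_one hn'.ne']
        field_simp

theorem oharaDensity_le [CompleteSpace E] (h : IsEquilateralPolygon n B p) (hn : 0 < n)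
    (hγ : IsUnitSpeedLoop γ T) (hB : ∀ k, B k = NormedSpace.normalize (meanTangent γ n k + c))
    (hc : ‖c‖ ≤ 1 / 2) (hv : ‖v‖ = 1) {α q κ : ℝ} (hα : 0 ≤ α) (hq : 1 ≤ q) (hκ : 0 < κ) (a : ℤ)
    {m : ℕ} (hm : 0 < m) (hmn : 2 * m ≤ n)
    (hlower : κ * (m / n) ≤ ‖p ((a + m : ℝ) / n) - p (a / n)‖) :
    oharaDensity α q p (a / n) ((a + m : ℝ) / n) ≤
      (8 * (α * κ ^ (-α - 1))) ^ q * (m / n) ^ (-(α * q) - 1) *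
        ∫ u in (a / n : ℝ)..((a + m) / n : ℝ), ‖T u - v‖ ^ (2 * q) := by
  have hx : (0 : ℝ) < m / n := by positivity
  have hupper := h.norm_chord_le hn a m
  have hmono : (m / n : ℝ) ^ (-α) ≤ ‖p ((a + m : ℝ) / n) - p (a / n)‖ ^ (-α) :=
    rpow_le_rpow_of_nonpos ((mul_pos hκ hx).trans_le hlower) hupper (by linarith)
  rw [oharaDensity, iDist_one_div_add_div hn a hmn]
  calc _ ≤ (α * κ ^ (-α - 1) * (m / n) ^ (-α - 1) *
          (m / n - ‖p ((a + m : ℝ) / n) - p (a / n)‖)) ^ q :=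
        rpow_le_rpow (sub_nonneg.2 hmono) (rpow_neg_sub_rpow_neg_le hα hκ hx hlower hupper)
          (by linarith)
    _ = (α * κ ^ (-α - 1)) ^ q * ((m / n) ^ (-α - 1)) ^ q *
          (m / n - ‖p ((a + m : ℝ) / n) - p (a / n)‖) ^ q := by
        rw [mul_rpow (by positivity) (sub_nonneg.2 hupper),
          mul_rpow (by positivity) (by positivity)]
    _ ≤ (α * κ ^ (-α - 1)) ^ q * ((m / n) ^ (-α - 1)) ^ q * (8 ^ q * (m / n) ^ (q - 1) *
          ∫ u in (a / n : ℝ)..((a + m) / n : ℝ), ‖T u - v‖ ^ (2 * q)) := by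
        gcongr
        exact h.sub_norm_chord_rpow_le hn hγ hB hc hv hq a hm
    _ = _ := by
        have hpow : ((m / n : ℝ) ^ (-α - 1)) ^ q * (m / n) ^ (q - 1) =
            (m / n) ^ (-(α * q) - 1) := by
          rw [← rpow_mul hx.le, ← rpow_add hx]
          ring_nf
        rw [← hpow, mul_rpow (x := 8) (by norm_num) (by positivity)]
        ring

end IsEquilateralPolygon

end ArcEstimate

section BallMass

/-- The integrand of `scaledBallMass`. -/
noncomputable def ballKernel (β : ℝ) (g : ℝ → ℝ → ℝ≥0∞) (x y u : ℝ) : ℝ≥0∞ :=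
  if iDist 1 x u ≤ 3 * iDist 1 x y then ENNReal.ofReal (iDist 1 x y ^ (-β - 1)) * g x u else 0

/-- The mass of `g x` on the ball around `x` of radius three times the distance of `x` and `y`,
scaled by that distance to the power `-β - 1`. It majorizes the discrete energy densities. -/
noncomputable def scaledBallMass (β : ℝ) (g : ℝ → ℝ → ℝ≥0∞) (x y : ℝ) : ℝ≥0∞ :=
  ∫⁻ u in Set.Ioc (0 : ℝ) 1, ballKernel β g x y u

variable {β : ℝ} {g : ℝ → ℝ → ℝ≥0∞}

theorem scaledBallMass_eq (β : ℝ) (g : ℝ → ℝ → ℝ≥0∞) (x y : ℝ) :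
    scaledBallMass β g x y = ENNReal.ofReal (iDist 1 x y ^ (-β - 1)) *
      ∫⁻ u in Set.Ioc (0 : ℝ) 1, if iDist 1 x u ≤ 3 * iDist 1 x y then g x u else 0 := by
  simp only [scaledBallMass, ballKernel, ← lintegral_const_mul' _ _ ENNReal.ofReal_ne_top,
    mul_ite, mul_zero]

theorem measurable_ballKernel (β : ℝ) (hg : Measurable (Function.uncurry g)) :
    Measurable fun z : (ℝ × ℝ) × ℝ ↦ ballKernel β g z.1.1 z.1.2 z.2 := by
  have hx : Measurable fun z : (ℝ × ℝ) × ℝ ↦ z.1.1 := by fun_prop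
  have hxy := measurable_iDist_one hx (measurable_snd.comp measurable_fst)
  exact Measurable.ite
    (measurableSet_le (measurable_iDist_one hx measurable_snd) (hxy.const_mul 3))
    ((hxy.pow_const _).ennreal_ofReal.mul (hg.comp (hx.prodMk measurable_snd))) measurable_const

theorem measurable_scaledBallMass (β : ℝ) (hg : Measurable (Function.uncurry g)) :
    Measurable fun z : ℝ × ℝ ↦ scaledBallMass β g z.1 z.2 :=
  (measurable_ballKernel β hg).lintegral_prod_right'

theorem setLIntegral_Ici_rpow (hβ : 0 < β) {r : ℝ} (hr : 0 < r) :
    ∫⁻ t in Set.Ici r, ENNReal.ofReal (t ^ (-β - 1)) = ENNReal.ofReal (r ^ (-β) / β) := by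
  rw [setLIntegral_congr Ioi_ae_eq_Ici.symm, ← ofReal_integral_eq_lintegral_ofReal
      (integrableOn_Ioi_rpow_of_lt (by linarith) hr), integral_Ioi_rpow_of_lt (by linarith) hr,
    sub_add_cancel, div_neg, neg_div, neg_neg]
  filter_upwards [ae_restrict_mem measurableSet_Ioi] with t ht
  exact rpow_nonneg (hr.trans ht).le _

theorem lintegral_rpow_iDist_le (hβ : 0 < β) {r : ℝ} (hr : 0 < r) (x : ℝ) :
    ∫⁻ y in Set.Ioc (0 : ℝ) 1,
        (Set.Ici r).indicator (fun t ↦ ENNReal.ofReal (t ^ (-β - 1))) (iDist 1 x y) ≤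
      ENNReal.ofReal (2 / β * r ^ (-β)) := by
  set F : ℝ → ℝ≥0∞ := (Set.Ici r).indicator fun t ↦ ENNReal.ofReal (t ^ (-β - 1)) with hF
  have hFmeas : Measurable F := Measurable.indicator (by fun_prop) measurableSet_Ici
  have habs (t : ℝ) : F |t| ≤ F t + F (-t) := by
    rcases abs_choice t with ht | ht <;> rw [ht]
    exacts [le_self_add, le_add_self]
  have hshift := setLIntegral_Ioc_add_one_eq ((iDist_one_periodic_right x).comp F) 0 (x - 1 / 2)
  rw [zero_add] at hshift
  calc ∫⁻ y in Set.Ioc (0 : ℝ) 1, F (iDist 1 x y)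
      = ∫⁻ y in Set.Ioc (x - 1 / 2) (x - 1 / 2 + 1), F |y - x| :=
        hshift.trans (setLIntegral_congr_fun measurableSet_Ioc fun y hy ↦ by
          have hyx : |y - x| ≤ 1 / 2 := abs_le.2 ⟨by linarith [hy.1], by linarith [hy.2]⟩
          rw [Function.comp_apply, iDist_one_eq_abs hyx])
    _ ≤ ∫⁻ y, (F (y - x) + F (-(y - x))) :=
        (setLIntegral_le_lintegral _ _).trans (lintegral_mono fun y ↦ habs _)
    _ = 2 * ∫⁻ y, F y := by
        rw [lintegral_sub_right_eq_self (fun y ↦ F y + F (-y)) x, lintegral_add_left hFmeas,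
          lintegral_neg_eq_self, two_mul]
    _ = ENNReal.ofReal (2 / β * r ^ (-β)) := by
        rw [hF, lintegral_indicator measurableSet_Ici, setLIntegral_Ici_rpow hβ hr,
          ← ENNReal.ofReal_ofNat, ← ENNReal.ofReal_mul zero_le_two, mul_div_left_comm]
        ring_nf

theorem ae_iDist_one_pos (x : ℝ) : ∀ᵐ u, 0 < iDist 1 x u := by
  have hcountable : (Set.range fun k : ℤ ↦ x + k).Countable := Set.countable_range _
  filter_upwards [hcountable.ae_notMem volume] with u hu
  refine (iDist_one_nonneg x u).lt_of_ne' fun hzero ↦ hu ?_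
  obtain ⟨k, hk⟩ := iDist_one_eq_zero_iff.1 hzero
  exact ⟨k, by simp [← hk]⟩

theorem lintegral_ballKernel_le (hβ : 0 < β) (g : ℝ → ℝ → ℝ≥0∞) {x u : ℝ}
    (hu : 0 < iDist 1 x u) :
    ∫⁻ y in Set.Ioc (0 : ℝ) 1, ballKernel β g x y u ≤
      ENNReal.ofReal (2 / β * 3 ^ β) * (g x u * ENNReal.ofReal (iDist 1 x u ^ (-β))) := by
  have hker (y : ℝ) : ballKernel β g x y u = (Set.Ici (iDist 1 x u / 3)).indicator
      (fun t ↦ ENNReal.ofReal (t ^ (-β - 1))) (iDist 1 x y) * g x u := by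
    simp only [ballKernel, Set.indicator_apply, Set.mem_Ici, div_le_iff₀' (three_pos (α := ℝ)),
      ite_mul, zero_mul]
  have hscale : 2 / β * (iDist 1 x u / 3) ^ (-β) = 2 / β * 3 ^ β * iDist 1 x u ^ (-β) := by
    rw [div_rpow hu.le three_pos.le, rpow_neg three_pos.le, div_inv_eq_mul]
    ring
  have hmeas : Measurable fun y ↦ (Set.Ici (iDist 1 x u / 3)).indicator
      (fun t ↦ ENNReal.ofReal (t ^ (-β - 1))) (iDist 1 x y) :=
    (Measurable.indicator (by fun_prop) measurableSet_Ici).comp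
      (measurable_iDist_one measurable_const measurable_id)
  simp only [hker]
  rw [lintegral_mul_const _ hmeas, mul_comm (g x u), ← mul_assoc,
    ← ENNReal.ofReal_mul (by positivity), ← hscale]
  gcongr
  exact lintegral_rpow_iDist_le hβ (div_pos hu three_pos) x

theorem lintegral_scaledBallMass_le (hβ : 0 < β) (hg : Measurable (Function.uncurry g)) (x : ℝ) :
    ∫⁻ y in Set.Ioc (0 : ℝ) 1, scaledBallMass β g x y ≤ ENNReal.ofReal (2 / β * 3 ^ β) *
      ∫⁻ u in Set.Ioc (0 : ℝ) 1, g x u * ENNReal.ofReal (iDist 1 x u ^ (-β)) := by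
  have hpair : Measurable fun z : ℝ × ℝ ↦ ((x, z.1), z.2) := by fun_prop
  have hmeas := (measurable_ballKernel β hg).comp hpair
  simp only [scaledBallMass]
  rw [lintegral_lintegral_swap (f := ballKernel β g x) hmeas.aemeasurable,
    ← lintegral_const_mul' _ _ ENNReal.ofReal_ne_top]
  refine lintegral_mono_ae (ae_restrict_of_ae ?_)
  filter_upwards [ae_iDist_one_pos x] with u hu using lintegral_ballKernel_le hβ g hu

theorem lintegral_lintegral_scaledBallMass_lt_top (hβ : 0 < β)
    (hg : Measurable (Function.uncurry g))
    (hfin : ∫⁻ x in Set.Ioc (0 : ℝ) 1, ∫⁻ u in Set.Ioc (0 : ℝ) 1,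
      g x u * ENNReal.ofReal (iDist 1 x u ^ (-β)) < ⊤) :
    ∫⁻ x in Set.Ioc (0 : ℝ) 1, ∫⁻ y in Set.Ioc (0 : ℝ) 1, scaledBallMass β g x y < ⊤ := by
  refine (lintegral_mono fun x ↦ lintegral_scaledBallMass_le hβ hg x).trans_lt ?_
  rw [lintegral_const_mul' _ _ ENNReal.ofReal_ne_top]
  exact ENNReal.mul_lt_top ENNReal.ofReal_lt_top hfin

end BallMass

section Domination

theorem exists_int_forall_periodic_eq {n : ℕ} (hn : 0 < n) (i j : ℤ) :
    ∃ k : ℤ, 2 * k.natAbs ≤ n ∧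
      ∀ f : ℝ → ℝ, Function.Periodic f 1 → f (j / n) = f ((i + k : ℝ) / n) := by
  have hn' : (n : ℝ) ≠ 0 := by positivity
  have hlower := Int.le_bmod (x := j - i) hn
  have hupper := Int.bmod_lt (x := j - i) hn
  refine ⟨(j - i).bmod n, by omega, fun f hf ↦ ?_⟩
  have hdiv : (((j - i).bmod n : ℤ) : ℝ) = j - i - n * ((j - i).bdiv n : ℤ) := by
    exact_mod_cast Int.bmod_eq_self_sub_mul_bdiv _ _
  have hj : (i + (j - i - n * ((j - i).bdiv n : ℤ)) : ℝ) / n =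
      j / n - ((j - i).bdiv n : ℤ) * 1 := by
    field_simp
    ring
  rw [hdiv, hj, hf.sub_int_mul_eq]

theorem exists_arc_oharaDensity_eq {E : Type*} [NormedAddCommGroup E] {p : ℝ → E}
    (hp : Function.Periodic p 1) (α q : ℝ) {n : ℕ} (hn : 0 < n) (i j : ℤ) :
    ∃ (a : ℤ) (m : ℕ), 2 * m ≤ n ∧ a ≤ i ∧ i ≤ a + m ∧ iDist 1 (i / n) (j / n) = m / n ∧
      oharaDensity α q p (i / n) (j / n) = oharaDensity α q p (a / n) ((a + m : ℝ) / n) := by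
  obtain ⟨k, hkn, hshift⟩ := exists_int_forall_periodic_eq hn i j
  rw [hshift _ (iDist_one_periodic_right _), hshift _ (oharaDensity_periodic_right hp _)]
  obtain ⟨m, rfl | rfl⟩ := Int.eq_nat_or_neg k
  · have hm : 2 * m ≤ n := by omega
    exact ⟨i, m, hm, le_rfl, by omega, by simpa using iDist_one_div_add_div hn i hm, by simp⟩
  · have hm : 2 * m ≤ n := by omega
    have hdist := iDist_one_div_add_div hn (i - m) hm
    refine ⟨i - m, m, hm, by omega, by omega, ?_, ?_⟩
    · rw [iDist_one_comm]
      simpa [sub_eq_add_neg] using hdist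
    · rw [oharaDensity_comm]
      simp [sub_eq_add_neg]

theorem abs_iDist_one_ceil_sub_le {n : ℕ} (hn : 0 < n) (x y : ℝ) :
    |iDist 1 (⌈n * x⌉ / n) (⌈n * y⌉ / n) - iDist 1 x y| ≤ 1 / n := by
  have hn' : (0 : ℝ) < n := Nat.cast_pos.2 hn
  refine (abs_iDist_one_sub_iDist_one_le _ _ _ _).trans ?_
  have hdiff : (⌈n * y⌉ : ℝ) / n - ⌈n * x⌉ / n - (y - x) =
      ((⌈n * y⌉ - n * y) - (⌈n * x⌉ - n * x)) / n := by
    field_simp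
    ring
  rw [hdiff, abs_div, abs_of_pos hn']
  gcongr
  rw [abs_le]
  constructor <;> linarith [Int.le_ceil (n * x), Int.ceil_lt_add_one (n * x),
    Int.le_ceil (n * y), Int.ceil_lt_add_one (n * y)]

theorem ofReal_integral_le_setLIntegral_ite {f : ℝ → ℝ} (hf : Continuous f) (hf0 : ∀ u, 0 ≤ f u)
    (hper : Function.Periodic f 1) {a b x ρ : ℝ} (hab : a ≤ b) (hb : b ≤ a + 1)
    (hρ : ∀ u ∈ Set.Ioc a b, iDist 1 x u ≤ ρ) :
    ENNReal.ofReal (∫ u in a..b, f u) ≤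
      ∫⁻ u in Set.Ioc (0 : ℝ) 1, if iDist 1 x u ≤ ρ then ENNReal.ofReal (f u) else 0 := by
  have hper' : Function.Periodic
      (fun u ↦ if iDist 1 x u ≤ ρ then ENNReal.ofReal (f u) else 0) 1 := fun u ↦ by
    simp only [iDist_one_periodic_right x u, hper u]
  have hshift := setLIntegral_Ioc_add_one_eq hper' a 0
  rw [zero_add] at hshift
  rw [← hshift, intervalIntegral.integral_of_le hab,
    ofReal_integral_eq_lintegral_ofReal (hf.integrableOn_Ioc) (ae_of_all _ hf0)]
  calc _ = ∫⁻ u in Set.Ioc a b, if iDist 1 x u ≤ ρ then ENNReal.ofReal (f u) else 0 :=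
        setLIntegral_congr_fun measurableSet_Ioc fun u hu ↦ by simp only [if_pos (hρ u hu)]
    _ ≤ _ := lintegral_mono_set (Set.Ioc_subset_Ioc_right hb)

theorem pos_and_comparable_of_abs_div_sub_le {n m : ℕ} (hn : 0 < n) (hm : 2 ≤ m) {D : ℝ}
    (h : |m / n - D| ≤ 1 / n) : 0 < D ∧ 2 / 3 * D ≤ m / n ∧ (m + 1 : ℝ) / n ≤ 3 * D := by
  have hmesh : (0 : ℝ) < 1 / n := by positivity
  have hm' : 2 * (1 / n : ℝ) ≤ m / n := by
    rw [mul_one_div]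
    gcongr
    exact_mod_cast hm
  rw [abs_le] at h
  rw [add_div]
  refine ⟨?_, ?_, ?_⟩ <;> linarith

theorem iDist_one_le_of_mem_arc {n m : ℕ} (hn : 0 < n) {x u : ℝ} {a : ℤ} (ha : a ≤ ⌈n * x⌉)
    (ham : ⌈n * x⌉ ≤ a + m) (hu : u ∈ Set.Ioc (a / n : ℝ) ((a + m) / n)) :
    iDist 1 x u ≤ (m + 1) / n := by
  have hn' : (0 : ℝ) < n := Nat.cast_pos.2 hn
  have ha' : (a : ℝ) ≤ ⌈n * x⌉ := by exact_mod_cast ha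
  have ham' : (⌈n * x⌉ : ℝ) ≤ a + m := by exact_mod_cast ham
  have hu1 := (div_lt_iff₀' hn').1 hu.1
  have hu2 := (le_div_iff₀' hn').1 hu.2
  refine (iDist_one_le_abs x u).trans ((le_div_iff₀' hn').2 ?_)
  rw [← abs_of_pos hn', ← abs_mul, abs_le]
  constructor <;> linarith [Int.le_ceil (n * x), Int.ceil_lt_add_one (n * x)]

/-- The Sobolev-Slobodeckij integrand of the tangent, without its singular weight. -/
noncomputable def tangentOscillation {E : Type*} [NormedAddCommGroup E] (T : ℝ → E) (r x u : ℝ) :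
    ℝ≥0∞ :=
  ENNReal.ofReal (‖T u - T x‖ ^ r)

variable {E : Type*} [NormedAddCommGroup E]

theorem measurable_tangentOscillation {T : ℝ → E} (hT : Continuous T) (r : ℝ) :
    Measurable (Function.uncurry (tangentOscillation T r)) := by
  have hdiff : Continuous fun z : ℝ × ℝ ↦ ‖T z.2 - T z.1‖ := by fun_prop
  exact (hdiff.measurable.pow_const r).ennreal_ofReal

theorem ofReal_mul_integral_le_scaledBallMass {T : ℝ → E} (hT : Continuous T)
    (hper : Function.Periodic T 1) {r β : ℝ} (hr : 0 ≤ r) (hβ : 0 ≤ β) {n : ℕ} (hn : 0 < n)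
    {x y : ℝ} {a : ℤ} {m : ℕ} (hm : 2 ≤ m) (hmn : m ≤ n) (ha : a ≤ ⌈n * x⌉) (ham : ⌈n * x⌉ ≤ a + m)
    (hdist : |m / n - iDist 1 x y| ≤ 1 / n) :
    ENNReal.ofReal ((m / n) ^ (-β - 1) *
        ∫ u in (a / n : ℝ)..((a + m) / n : ℝ), ‖T u - T x‖ ^ r) ≤
      ENNReal.ofReal ((3 / 2) ^ (β + 1)) * scaledBallMass β (tangentOscillation T r) x y := by
  have hn' : (0 : ℝ) < n := Nat.cast_pos.2 hn
  obtain ⟨hD, hDm, hmD⟩ := pos_and_comparable_of_abs_div_sub_le hn hm hdist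
  have hpow : (m / n : ℝ) ^ (-β - 1) ≤ (3 / 2) ^ (β + 1) * iDist 1 x y ^ (-β - 1) := by
    refine (rpow_le_rpow_of_nonpos (by positivity) hDm (by linarith)).trans_eq ?_
    rw [mul_rpow (by norm_num) hD.le, ← neg_add', rpow_neg (by norm_num),
      ← inv_rpow (by norm_num), inv_div]
  have hint := ofReal_integral_le_setLIntegral_ite (f := fun u ↦ ‖T u - T x‖ ^ r)
    ((hT.sub continuous_const).norm.rpow_const fun _ ↦ Or.inr hr)
    (fun _ ↦ by positivity) (fun u ↦ by simp only [hper u]) (by gcongr; simp)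
    (by rw [div_add_one hn'.ne']; gcongr)
    fun u hu ↦ (iDist_one_le_of_mem_arc hn ha ham hu).trans hmD
  rw [scaledBallMass_eq, ← mul_assoc, ← ENNReal.ofReal_mul (by positivity),
    ENNReal.ofReal_mul (by positivity)]
  exact mul_le_mul' (ENNReal.ofReal_le_ofReal hpow) hint

variable [InnerProductSpace ℝ E]

theorem IsEquilateralPolygon.enorm_oharaDensity_ceil_le [CompleteSpace E] {n : ℕ} {B : ℤ → E}
    {p γ T : ℝ → E} {c : E} (h : IsEquilateralPolygon n B p) (hn : 0 < n)
    (hγ : IsUnitSpeedLoop γ T) (hB : ∀ k, B k = NormedSpace.normalize (meanTangent γ n k + c))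
    (hc : ‖c‖ ≤ 1 / 2) {α q κ : ℝ} (hα : 0 ≤ α) (hq : 1 ≤ q) (hκ : 0 < κ)
    (hlower : ∀ (a : ℤ) (m : ℕ), 2 * m ≤ n →
      κ * (m / n) ≤ ‖p ((a + m : ℝ) / n) - p (a / n)‖) (x y : ℝ) :
    ‖oharaDensity α q p (⌈n * x⌉ / n) (⌈n * y⌉ / n)‖ₑ ≤
      ENNReal.ofReal ((8 * (α * κ ^ (-α - 1))) ^ q * (3 / 2) ^ (α * q + 1)) *
        scaledBallMass (α * q) (tangentOscillation T (2 * q)) x y := by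
  obtain ⟨a, m, hmn, ha, ham, hdist, hdensity⟩ :=
    exists_arc_oharaDensity_eq h.periodic α q hn ⌈n * x⌉ ⌈n * y⌉
  have harc := iDist_one_div_add_div hn a hmn
  rw [hdensity]
  rcases lt_or_ge m 2 with hm | hm
  · have hchord : ‖p ((a + m : ℝ) / n) - p (a / n)‖ = m / n := by
      interval_cases m
      · simp
      · simpa using h.norm_edge_chord hn a
    rw [oharaDensity_eq_zero_of_norm_eq_iDist (by linarith) (hchord.trans harc.symm), enorm_zero]
    exact zero_le
  have hpos : 0 < ‖p ((a + m : ℝ) / n) - p (a / n)‖ :=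
    lt_of_lt_of_le (by positivity) (hlower a m hmn)
  have hnonneg : 0 ≤ oharaDensity α q p (a / n) ((a + m : ℝ) / n) :=
    oharaDensity_nonneg hα hpos ((h.norm_chord_le hn a m).trans_eq harc.symm)
  have hclose := abs_iDist_one_ceil_sub_le hn x y
  rw [hdist] at hclose
  rw [Real.enorm_of_nonneg hnonneg]
  refine (ENNReal.ofReal_le_ofReal (h.oharaDensity_le hn hγ hB hc (hγ.norm_tangent x) hα hq hκ a
    (by omega) hmn (hlower a m hmn))).trans ?_
  have hK : 0 ≤ (8 * (α * κ ^ (-α - 1))) ^ q := by positivity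
  rw [mul_assoc, ENNReal.ofReal_mul hK, ENNReal.ofReal_mul hK, mul_assoc]
  gcongr
  exact ofReal_mul_integral_le_scaledBallMass hγ.continuous_tangent hγ.periodic_tangent
    (by linarith) (by positivity) hn hm (by omega) ha ham hclose

end Domination

section RiemannSums

theorem tendsto_int_ceil_mul_div (x : ℝ) :
    Tendsto (fun n : ℕ ↦ (⌈n * x⌉ : ℝ) / n) atTop (nhds x) := by
  have hupper : Tendsto (fun n : ℕ ↦ x + 1 / (n : ℝ)) atTop (nhds x) := by
    simpa using tendsto_one_div_atTop_nhds_zero_nat.const_add x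
  refine tendsto_of_tendsto_of_tendsto_of_le_of_le' tendsto_const_nhds hupper ?_ ?_ <;>
    filter_upwards [eventually_gt_atTop 0] with n hn
  · have hn' : (0 : ℝ) < n := Nat.cast_pos.2 hn
    exact (le_div_iff₀' hn').2 (Int.le_ceil _)
  · have hn' : (0 : ℝ) < n := Nat.cast_pos.2 hn
    rw [div_le_iff₀' hn', mul_add, mul_one_div_cancel hn'.ne']
    exact (Int.ceil_lt_add_one _).le

theorem ceil_mul_eq_add_one {n : ℕ} (hn : 0 < n) {k : ℕ} {u : ℝ}
    (hu : u ∈ Set.Ioc (k / n : ℝ) ((k + 1 : ℕ) / n)) : ⌈n * u⌉ = k + 1 := by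
  have hn' : (0 : ℝ) < n := Nat.cast_pos.2 hn
  have hlower := (div_lt_iff₀' hn').1 hu.1
  have hupper := (le_div_iff₀' hn').1 hu.2
  push_cast at hupper
  rw [Int.ceil_eq_iff]
  push_cast
  exact ⟨by linarith, hupper⟩

theorem setIntegral_ceil_mul {n : ℕ} (hn : 0 < n) (f : ℤ → ℝ) :
    ∫ u in Set.Ioc (0 : ℝ) 1, f ⌈n * u⌉ = 1 / n * ∑ i ∈ Finset.Icc (1 : ℤ) n, f i := by
  have hn' : (0 : ℝ) < n := Nat.cast_pos.2 hn
  have hle (k : ℕ) : (k / n : ℝ) ≤ (k + 1 : ℕ) / n := by gcongr; simp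
  have hcell (k : ℕ) : Set.EqOn (fun u : ℝ ↦ f ⌈n * u⌉) (fun _ ↦ f (k + 1))
      (Set.Ioc (k / n : ℝ) ((k + 1 : ℕ) / n)) := fun u hu ↦ congrArg f (ceil_mul_eq_add_one hn hu)
  have hintegral (k : ℕ) : ∫ u in (k / n : ℝ)..((k + 1 : ℕ) / n), f ⌈n * u⌉ =
      1 / n * f (k + 1) := by
    rw [intervalIntegral.integral_of_le (hle k), setIntegral_congr_fun measurableSet_Ioc (hcell k),
      ← intervalIntegral.integral_of_le (hle k), intervalIntegral.integral_const, ← sub_div,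
      Nat.cast_add_one, add_sub_cancel_left, smul_eq_mul]
  have hsum := intervalIntegral.sum_integral_adjacent_intervals (f := fun u : ℝ ↦ f ⌈n * u⌉)
    (μ := volume) (a := fun k : ℕ ↦ (k : ℝ) / n) (n := n) fun k _ ↦ by
      rw [intervalIntegrable_iff_integrableOn_Ioc_of_le (hle k)]
      exact (integrableOn_const (by simp)).congr_fun (hcell k).symm measurableSet_Ioc
  simp only [hintegral, Nat.cast_zero, zero_div, div_self hn'.ne'] at hsum
  rw [← intervalIntegral.integral_of_le zero_le_one, ← hsum, ← Finset.mul_sum]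
  congr 1
  refine Finset.sum_bij (fun k _ ↦ (k : ℤ) + 1) (fun k hk ↦ ?_) (fun _ _ _ _ ↦ by simp)
    (fun i hi ↦ ?_) fun _ _ ↦ rfl
  · simp only [Finset.mem_range, Finset.mem_Icc] at hk ⊢
    omega
  · rw [Finset.mem_Icc] at hi
    exact ⟨(i - 1).toNat, by rw [Finset.mem_range]; omega, by omega⟩

theorem setIntegral_setIntegral_ceil_mul {n : ℕ} (hn : 0 < n) (f : ℤ → ℤ → ℝ) :
    ∫ x in Set.Ioc (0 : ℝ) 1, ∫ y in Set.Ioc (0 : ℝ) 1, f ⌈n * x⌉ ⌈n * y⌉ =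
      1 / n ^ 2 * ∑ i ∈ Finset.Icc (1 : ℤ) n, ∑ j ∈ Finset.Icc (1 : ℤ) n, f i j := by
  simp_rw [setIntegral_ceil_mul hn (f _)]
  rw [setIntegral_ceil_mul hn fun i ↦ 1 / n * ∑ j ∈ Finset.Icc (1 : ℤ) n, f i j,
    ← Finset.mul_sum, ← mul_assoc, div_mul_div_comm, one_mul, sq]

theorem integrable_of_enorm_le {X : Type*} [MeasurableSpace X] {μ : Measure X} {f : X → ℝ}
    {G : X → ℝ≥0∞} (hf : AEStronglyMeasurable f μ) (hGfin : ∫⁻ x, G x ∂μ ≠ ⊤)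
    (hbound : ∀ x, ‖f x‖ₑ ≤ G x) : Integrable f μ :=
  ⟨hf, (lintegral_mono hbound).trans_lt hGfin.lt_top⟩

theorem integrable_and_tendsto_integral_of_enorm_le {X : Type*} [MeasurableSpace X]
    {μ : Measure X} {F : ℕ → X → ℝ} {f : X → ℝ} {G : X → ℝ≥0∞}
    (hF : ∀ n, AEStronglyMeasurable (F n) μ) (hG : AEMeasurable G μ) (hGfin : ∫⁻ x, G x ∂μ ≠ ⊤)
    (hbound : ∀ᶠ n in atTop, ∀ x, ‖F n x‖ₑ ≤ G x)
    (hlim : ∀ᵐ x ∂μ, Tendsto (fun n ↦ F n x) atTop (nhds (f x))) :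
    Integrable f μ ∧ Tendsto (fun n ↦ ∫ x, F n x ∂μ) atTop (nhds (∫ x, f x ∂μ)) := by
  have hboundReal : ∀ᶠ n in atTop, ∀ᵐ x ∂μ, ‖F n x‖ ≤ (G x).toReal := by
    filter_upwards [hbound] with n hn
    filter_upwards [ae_lt_top' hG hGfin] with x hx
    simpa using ENNReal.toReal_mono hx.ne (hn x)
  refine ⟨⟨aestronglyMeasurable_of_tendsto_ae atTop hF hlim, ?_⟩,
    tendsto_integral_filter_of_dominated_convergence _ (.of_forall hF) hboundReal
      (integrable_toReal_of_lintegral_ne_top hG hGfin) hlim⟩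
  obtain ⟨N, hN⟩ := eventually_atTop.1 hbound
  have hGfin' : HasFiniteIntegral G μ := by simpa [HasFiniteIntegral] using hGfin.lt_top
  refine hasFiniteIntegral_of_dominated_convergence_enorm (F' := fun n ↦ F (n + N)) hGfin'
    (fun n ↦ ae_of_all _ (hN _ (Nat.le_add_left N n))) ?_
  filter_upwards [hlim] with x hx using hx.comp (tendsto_add_atTop_nat N)

theorem tendsto_sum_sum_of_enorm_ceil_le {F : ℕ → ℤ → ℤ → ℝ} {f : ℝ → ℝ → ℝ}
    {G : ℝ → ℝ → ℝ≥0∞} (hG : Measurable (Function.uncurry G))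
    (hGfin : ∫⁻ x in Set.Ioc (0 : ℝ) 1, ∫⁻ y in Set.Ioc (0 : ℝ) 1, G x y < ⊤)
    (hbound : ∀ᶠ n : ℕ in atTop, ∀ x y : ℝ, ‖F n ⌈n * x⌉ ⌈n * y⌉‖ₑ ≤ G x y)
    (hlim : ∀ᵐ z : ℝ × ℝ,
      Tendsto (fun n : ℕ ↦ F n ⌈n * z.1⌉ ⌈n * z.2⌉) atTop (nhds (f z.1 z.2))) :
    Tendsto (fun n : ℕ ↦ 1 / (n : ℝ) ^ 2 *
        ∑ i ∈ Finset.Icc (1 : ℤ) n, ∑ j ∈ Finset.Icc (1 : ℤ) n, F n i j)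
      atTop (nhds (∫ x in Set.Ioc (0 : ℝ) 1, ∫ y in Set.Ioc (0 : ℝ) 1, f x y)) := by
  let μ := (volume.restrict (Set.Ioc (0 : ℝ) 1)).prod (volume.restrict (Set.Ioc (0 : ℝ) 1))
  let step (n : ℕ) (z : ℝ × ℝ) : ℝ := F n ⌈n * z.1⌉ ⌈n * z.2⌉
  have hstep (n : ℕ) : AEStronglyMeasurable (step n) μ := by
    have hF : Measurable fun w : ℤ × ℤ ↦ F n w.1 w.2 := measurable_of_countable _
    have hceil : Measurable fun z : ℝ × ℝ ↦ (⌈n * z.1⌉, ⌈n * z.2⌉) := by fun_prop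
    exact (hF.comp hceil).aestronglyMeasurable
  have hGfin' : ∫⁻ z, Function.uncurry G z ∂μ ≠ ⊤ := by
    rw [lintegral_prod _ hG.aemeasurable]
    exact hGfin.ne
  have hbound' : ∀ᶠ n in atTop, ∀ z, ‖step n z‖ₑ ≤ Function.uncurry G z :=
    hbound.mono fun n hn z ↦ hn z.1 z.2
  have hlim' : ∀ᵐ z ∂μ, Tendsto (fun n ↦ step n z) atTop (nhds (Function.uncurry f z)) := by
    simp only [μ, Measure.prod_restrict]
    exact ae_restrict_of_ae hlim
  obtain ⟨hf, htendsto⟩ := integrable_and_tendsto_integral_of_enorm_le hstep hG.aemeasurable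
    hGfin' hbound' hlim'
  rw [integral_prod _ hf] at htendsto
  refine htendsto.congr' ?_
  filter_upwards [hbound', eventually_gt_atTop 0] with n hn hpos
  rw [integral_prod _ (integrable_of_enorm_le (hstep n) hGfin' hn)]
  exact setIntegral_setIntegral_ceil_mul hpos (F n)

end RiemannSums

section EnergyConvergence

theorem ae_prod_iDist_one_pos : ∀ᵐ z : ℝ × ℝ, 0 < iDist 1 z.1 z.2 :=
  (Measure.ae_prod_iff_ae_ae
    (measurableSet_lt measurable_const (measurable_iDist_one measurable_fst measurable_snd))).2
    (ae_of_all _ ae_iDist_one_pos)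

variable {E : Type*} [NormedAddCommGroup E]

theorem tendsto_oharaDensity_ceil {γ : ℝ → E} (hγ : Continuous γ) {p : ℕ → ℝ → E}
    (hp : TendstoUniformly p γ atTop) (α : ℝ) {q : ℝ} (hq : 0 ≤ q) {x y : ℝ}
    (hD : iDist 1 x y ≠ 0) (hxy : γ x ≠ γ y) :
    Tendsto (fun n : ℕ ↦ oharaDensity α q (p n) (⌈n * x⌉ / n) (⌈n * y⌉ / n)) atTop
      (nhds (oharaDensity α q γ x y)) := by
  have hvertex (w : ℝ) : Tendsto (fun n : ℕ ↦ p n (⌈n * w⌉ / n)) atTop (nhds (γ w)) :=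
    hp.tendsto_comp hγ.continuousAt (tendsto_int_ceil_mul_div w)
  have hchord := ((hvertex y).sub (hvertex x)).norm.rpow_const (p := -α)
    (Or.inl (norm_ne_zero_iff.2 (sub_ne_zero.2 hxy.symm)))
  have hdist : Tendsto (fun n : ℕ ↦ iDist 1 (⌈n * x⌉ / n) (⌈n * y⌉ / n)) atTop
      (nhds (iDist 1 x y)) := by
    rw [tendsto_iff_dist_tendsto_zero]
    refine squeeze_zero' (.of_forall fun _ ↦ dist_nonneg) ?_ tendsto_one_div_atTop_nhds_zero_nat
    filter_upwards [eventually_gt_atTop 0] with n hn using abs_iDist_one_ceil_sub_le hn x y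
  exact (hchord.sub (hdist.rpow_const (Or.inl hD))).rpow_const (Or.inr hq)

variable [InnerProductSpace ℝ E]

namespace IsApproximatingPolygons

variable {γ T : ℝ → E} {c : ℕ → E} {B : ℕ → ℤ → E} {p : ℕ → ℝ → E} {α q : ℝ}

theorem tendstoUniformly (h : IsApproximatingPolygons γ T c B p) :
    TendstoUniformly p γ atTop := by
  rw [Metric.tendstoUniformly_iff]
  intro ε hε
  filter_upwards [h.eventually_norm_sub_le (ε / 2) (half_pos hε)] with n hn u
  rw [dist_comm, dist_eq_norm]
  exact (hn u).trans_lt (half_lt_self hε)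

theorem ae_tendsto_oharaDensity_ceil (h : IsApproximatingPolygons γ T c B p)
    (hγ : IsUnitSpeedLoop γ T) (hinj : Set.InjOn γ (Set.Ico 0 1)) (α : ℝ) (hq : 0 ≤ q) :
    ∀ᵐ z : ℝ × ℝ, Tendsto
      (fun n : ℕ ↦ oharaDensity α q (p n) (⌈n * z.1⌉ / n) (⌈n * z.2⌉ / n)) atTop
      (nhds (oharaDensity α q γ z.1 z.2)) := by
  filter_upwards [ae_prod_iDist_one_pos] with z hz
  refine tendsto_oharaDensity_ceil hγ.continuous h.tendstoUniformly α hq hz.ne' fun heq ↦ hz.ne' ?_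
  obtain ⟨k, hk⟩ := exists_int_sub_eq_of_injOn_Ico hγ.periodic hinj heq
  exact iDist_one_eq_zero_iff.2 ⟨k, hk⟩

variable [CompleteSpace E]

theorem exists_eventually_enorm_oharaDensity_ceil_le (h : IsApproximatingPolygons γ T c B p)
    (hγ : IsUnitSpeedLoop γ T) (hinj : Set.InjOn γ (Set.Ico 0 1)) (hα : 0 ≤ α) (hq : 1 ≤ q) :
    ∃ K : ℝ, ∀ᶠ n : ℕ in atTop, ∀ x y : ℝ,
      ‖oharaDensity α q (p n) (⌈n * x⌉ / n) (⌈n * y⌉ / n)‖ₑ ≤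
        ENNReal.ofReal K * scaledBallMass (α * q) (tangentOscillation T (2 * q)) x y := by
  obtain ⟨κ, hκ, hbilip⟩ := hγ.exists_mul_iDist_le hinj
  have hsmall : ∀ᶠ n in atTop, ‖c n‖ < 1 / 2 :=
    (tendsto_zero_iff_norm_tendsto_zero.1 h.tendsto_shift).eventually_lt_const (by norm_num)
  refine ⟨(8 * (α * (κ / 2) ^ (-α - 1))) ^ q * (3 / 2) ^ (α * q + 1), ?_⟩
  filter_upwards [hsmall, h.eventually_edge_eq, h.eventually_norm_edge_sub_le _ (half_pos hκ),
    eventually_ge_atTop 3] with n hc hB hclose hn x y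
  have hn0 : 0 < n := by omega
  have hpoly := h.isEquilateralPolygon n hn
  exact hpoly.enorm_oharaDensity_ceil_le hn0 hγ hB hc.le hα hq (half_pos hκ)
    (fun a m hm ↦ hpoly.half_mul_le_norm_chord hn0 hγ hbilip hclose a hm) x y

theorem tendsto_sum_sum_oharaDensity (h : IsApproximatingPolygons γ T c B p)
    (hγ : IsUnitSpeedLoop γ T) (hinj : Set.InjOn γ (Set.Ico 0 1)) (hα : 0 < α) (hq : 1 ≤ q)
    (hfin : ∫⁻ x in Set.Ioc (0 : ℝ) 1, ∫⁻ u in Set.Ioc (0 : ℝ) 1,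
      tangentOscillation T (2 * q) x u * ENNReal.ofReal (iDist 1 x u ^ (-(α * q))) < ⊤) :
    Tendsto (fun n : ℕ ↦ 1 / (n : ℝ) ^ 2 * ∑ i ∈ Finset.Icc (1 : ℤ) n,
        ∑ j ∈ Finset.Icc (1 : ℤ) n, oharaDensity α q (p n) (i / n) (j / n))
      atTop (nhds (∫ x in Set.Ioc (0 : ℝ) 1, ∫ y in Set.Ioc (0 : ℝ) 1,
        oharaDensity α q γ x y)) := by
  obtain ⟨K, hK⟩ := h.exists_eventually_enorm_oharaDensity_ceil_le hγ hinj hα.le hq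
  have hT := measurable_tangentOscillation hγ.continuous_tangent (2 * q)
  refine tendsto_sum_sum_of_enorm_ceil_le (F := fun n i j ↦ oharaDensity α q (p n) (i / n) (j / n))
    ((measurable_scaledBallMass (α * q) hT).const_mul _) ?_ hK
    (h.ae_tendsto_oharaDensity_ceil hγ hinj α (by linarith))
  simp_rw [lintegral_const_mul' _ _ ENNReal.ofReal_ne_top]
  exact ENNReal.mul_lt_top ENNReal.ofReal_lt_top
    (lintegral_lintegral_scaledBallMass_lt_top (by positivity) hT hfin)

end IsApproximatingPolygons

end EnergyConvergence

section Energies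

theorem isUnitSpeedLoop_deriv {E : Type*} [NormedAddCommGroup E] [NormedSpace ℝ E] {γ : ℝ → E}
    (hC1 : ContDiff ℝ 1 γ) (hper : Function.Periodic γ 1) (hspeed : ∀ s, ‖deriv γ s‖ = 1) :
    IsUnitSpeedLoop γ (deriv γ) where
  hasDerivAt s := (hC1.differentiable one_ne_zero s).hasDerivAt
  continuous_tangent := hC1.continuous_deriv le_rfl
  periodic := hper
  norm_tangent := hspeed

theorem min_abs_sub_div_eq_iDist {n : ℕ} {i j : ℤ} (hi : i ∈ Finset.Icc (1 : ℤ) n)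
    (hj : j ∈ Finset.Icc (1 : ℤ) n) :
    ((min |j - i| (n - |j - i|) : ℤ) : ℝ) / n = iDist 1 (i / n) (j / n) := by
  rw [Finset.mem_Icc] at hi hj
  have hn : (0 : ℝ) < n := by exact_mod_cast (by omega : (0 : ℤ) < n)
  have habs : |(j / n - i / n : ℝ)| = |(j - i : ℝ)| / n := by
    rw [← sub_div, abs_div, abs_of_pos hn]
  have hle : |(j - i : ℝ)| ≤ n := by
    have : |j - i| ≤ n := abs_le.2 ⟨by omega, by omega⟩
    exact_mod_cast this
  rw [iDist_one_eq_min (by rw [habs]; exact (div_le_one hn).2 hle), habs, Int.cast_min,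
    ← min_div_div_right hn.le]
  push_cast
  rw [sub_div, div_self hn.ne']

theorem discreteEnergy_eq_sum_oharaDensity {E : Type*} [NormedAddCommGroup E] (p : ℝ → E)
    (α : ℝ) {q : ℝ} (hq : q ≠ 0) (n : ℕ) :
    1 / (α * (n : ℝ) ^ 2) * ∑ i ∈ Finset.Icc (1 : ℤ) n, ∑ j ∈ Finset.Icc (1 : ℤ) n,
        (if i = j then 0 else
          (‖p (j / n) - p (i / n)‖ ^ (-α) -
            (((min |j - i| ((n : ℤ) - |j - i|) : ℤ) : ℝ) / n) ^ (-α)) ^ q) =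
      1 / α * (1 / (n : ℝ) ^ 2 * ∑ i ∈ Finset.Icc (1 : ℤ) n, ∑ j ∈ Finset.Icc (1 : ℤ) n,
        oharaDensity α q p (i / n) (j / n)) := by
  rw [← mul_assoc, one_div_mul_one_div]
  congr 1
  refine Finset.sum_congr rfl fun i hi ↦ Finset.sum_congr rfl fun j hj ↦ ?_
  split_ifs with hij
  · rw [hij, oharaDensity_self hq]
  · rw [min_abs_sub_div_eq_iDist hi hj, oharaDensity]

theorem oharaE_one_eq (d : ℕ) (α q : ℝ) (γ : ℝ → EuclideanSpace ℝ (Fin d)) :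
    oharaE d α q 1 γ = 1 / α *
      ∫ x in Set.Ioc (0 : ℝ) 1, ∫ y in Set.Ioc (0 : ℝ) 1, oharaDensity α q γ x y := by
  rw [oharaE, one_rpow, mul_one]
  congr! 5 with x y
  exact oharaDensity_comm α q γ y x

theorem ofReal_div_iDist_rpow_eq {E : Type*} [NormedAddCommGroup E] (T : ℝ → E) (r β x u : ℝ) :
    ENNReal.ofReal (‖T x - T u‖ ^ r / iDist 1 u x ^ β) =
      tangentOscillation T r x u * ENNReal.ofReal (iDist 1 x u ^ (-β)) := by
  rw [tangentOscillation, ← ENNReal.ofReal_mul (by positivity), norm_sub_rev, iDist_one_comm,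
    rpow_neg (iDist_one_nonneg x u), div_eq_mul_inv]

end Energies

theorem stmt15_general (d : ℕ) (hd : 2 ≤ d) (α q σ : ℝ) (hα : 0 < α) (hq : 1 ≤ q)
    (hσ : σ = (α * q - 1) / (2 * q))
    (γ : ℝ → EuclideanSpace ℝ (Fin d))
    (hper : Function.Periodic γ 1)
    (hinj : Set.InjOn γ (Set.Ico (0 : ℝ) 1))
    (hC1 : ContDiff ℝ 1 γ)
    (hspeed : ∀ s : ℝ, ‖deriv γ s‖ = 1)
    (hsob : (∫⁻ t in Set.Ioc (0 : ℝ) 1, ∫⁻ s in Set.Ioc (0 : ℝ) 1,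
        ENNReal.ofReal
          (‖deriv γ t - deriv γ s‖ ^ (2 * q) / iDist 1 s t ^ (1 + 2 * q * σ))) < ⊤) :
    ∃ (p : ℕ → ℝ → EuclideanSpace ℝ (Fin d)) (t₀ : ℕ → ℝ)
      (B : ℕ → ℤ → EuclideanSpace ℝ (Fin d)),
      (∀ n : ℕ, 3 ≤ n → Function.Periodic (p n) 1 ∧ ∀ i : ℤ, ‖B n i‖ = 1 ∧
        ∀ u ∈ Set.Icc (t₀ n + (i : ℝ) / n) (t₀ n + ((i : ℝ) + 1) / n),
          p n u = p n (t₀ n + (i : ℝ) / n) + (u - (t₀ n + (i : ℝ) / n)) • B n i) ∧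
      (∀ ε : ℝ, 0 < ε → ∃ N : ℕ, ∀ n : ℕ, N ≤ n →
        (∀ u : ℝ, ‖p n u - γ u‖ ≤ ε) ∧
        (∀ i : ℤ, ∀ u ∈ Set.Icc (t₀ n + (i : ℝ) / n) (t₀ n + ((i : ℝ) + 1) / n),
          ‖B n i - deriv γ u‖ ≤ ε)) ∧
      Filter.Tendsto (fun n : ℕ =>
          (1 / (α * (n : ℝ) ^ 2)) *
            ∑ i ∈ Finset.Icc (1 : ℤ) (n : ℤ), ∑ j ∈ Finset.Icc (1 : ℤ) (n : ℤ),
              (if i = j then 0 else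
                (‖p n (t₀ n + (j : ℝ) / n) - p n (t₀ n + (i : ℝ) / n)‖ ^ (-α) -
                    (((min |j - i| ((n : ℤ) - |j - i|) : ℤ) : ℝ) / n) ^ (-α)) ^ q))
        Filter.atTop (nhds (oharaE d α q 1 γ)) := by
  have hγ := isUnitSpeedLoop_deriv hC1 hper hspeed
  have hweight : 1 + 2 * q * σ = α * q := by
    rw [hσ]
    field_simp
    ring
  simp only [hweight, ofReal_div_iDist_rpow_eq] at hsob
  obtain ⟨c, B, p, h⟩ := hγ.exists_isApproximatingPolygons (by simpa using hd)
  refine ⟨p, fun _ ↦ 0, B, fun n hn ↦ ?_, fun ε hε ↦ ?_, ?_⟩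
  · have hpoly := h.isEquilateralPolygon n hn
    simp only [zero_add]
    exact ⟨hpoly.periodic, fun i ↦ ⟨hpoly.norm_edge i, hpoly.affine i⟩⟩
  · simp only [zero_add]
    exact eventually_atTop.1
      ((h.eventually_norm_sub_le ε hε).and (h.eventually_norm_edge_sub_le ε hε))
  · simp only [zero_add, oharaE_one_eq,
      discreteEnergy_eq_sum_oharaDensity _ α (by linarith : q ≠ 0)]
    exact (h.tendsto_sum_sum_oharaDensity hγ hinj hα hq hsob).const_mul (1 / α)

theorem stmt15 (d : ℕ) (hd : 2 ≤ d) (α q σ : ℝ) (hα : 0 < α) (hq : 1 ≤ q)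
    (hαq1 : 2 ≤ α * q) (hαq2 : α * q < 2 * q + 1) (hσ : σ = (α * q - 1) / (2 * q))
    (γ : ℝ → EuclideanSpace ℝ (Fin d))
    (hper : Function.Periodic γ 1)
    (hinj : Set.InjOn γ (Set.Ico (0 : ℝ) 1))
    (hC1 : ContDiff ℝ 1 γ)
    (hspeed : ∀ s : ℝ, ‖deriv γ s‖ = 1)
    (hsob : (∫⁻ t in Set.Ioc (0 : ℝ) 1, ∫⁻ s in Set.Ioc (0 : ℝ) 1,
        ENNReal.ofReal
          (‖deriv γ t - deriv γ s‖ ^ (2 * q) / iDist 1 s t ^ (1 + 2 * q * σ))) < ⊤) :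
    ∃ (p : ℕ → ℝ → EuclideanSpace ℝ (Fin d)) (t₀ : ℕ → ℝ)
      (B : ℕ → ℤ → EuclideanSpace ℝ (Fin d)),
      (∀ n : ℕ, 3 ≤ n → Function.Periodic (p n) 1 ∧ ∀ i : ℤ, ‖B n i‖ = 1 ∧
        ∀ u ∈ Set.Icc (t₀ n + (i : ℝ) / n) (t₀ n + ((i : ℝ) + 1) / n),
          p n u = p n (t₀ n + (i : ℝ) / n) + (u - (t₀ n + (i : ℝ) / n)) • B n i) ∧
      (∀ ε : ℝ, 0 < ε → ∃ N : ℕ, ∀ n : ℕ, N ≤ n →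
        (∀ u : ℝ, ‖p n u - γ u‖ ≤ ε) ∧
        (∀ i : ℤ, ∀ u ∈ Set.Icc (t₀ n + (i : ℝ) / n) (t₀ n + ((i : ℝ) + 1) / n),
          ‖B n i - deriv γ u‖ ≤ ε)) ∧
      Filter.Tendsto (fun n : ℕ =>
          (1 / (α * (n : ℝ) ^ 2)) *
            ∑ i ∈ Finset.Icc (1 : ℤ) (n : ℤ), ∑ j ∈ Finset.Icc (1 : ℤ) (n : ℤ),
              (if i = j then 0 else
                (‖p n (t₀ n + (j : ℝ) / n) - p n (t₀ n + (i : ℝ) / n)‖ ^ (-α) -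
                    (((min |j - i| ((n : ℤ) - |j - i|) : ℤ) : ℝ) / n) ^ (-α)) ^ q))
        Filter.atTop (nhds (oharaE d α q 1 γ)) :=
  stmt15_general d hd α q σ hα hq hσ γ hper hinj hC1 hspeed hsob
end

section
/- Let (X, d_X) be a metric space, let Y be a subset of X, and let F_n, F : X → ℝ ∪ {±∞}. Assume: (1) for every x ∈ X and every sequence (x_n) in X with d_X(x_n, x) → 0, one has F(x) ≤ liminf_{n→∞} F_n(x_n); (2) for every y ∈ Y there exists a sequence (y_n) in X with d_X(y_n, y) → 0 and limsup_{n→∞} F_n(y_n) ≤ F(y). Let z_n, z ∈ X satisfy d_X(z_n, z) → 0 and suppose that F_n(z_n) and inf_X F_n are finite for all n and |F_n(z_n) − inf_X F_n| → 0. Then F(z) ≤ liminf_{n→∞} (inf_X F_n) ≤ inf_Y F. -/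
open Filter

/-!
The values `Fn n (zs n)` exceed the infima of `Fn n` by a vanishing error, so their lower limit is
at most that of the infima, and the liminf inequality along `zs` bounds `F z`. Conversely the
infimum of `Fn n` lies below its value along any recovery sequence.
-/

section

variable {ι : Type*} {l : Filter ι}

theorem liminf_le_liminf_of_forall_pos_eventually_le_add {u v : ι → EReal}
    (h : ∀ ε : ℝ, 0 < ε → ∀ᶠ i in l, u i ≤ v i + ε) : liminf u l ≤ liminf v l := by
  refine EReal.ge_of_forall_gt_iff_ge.1 fun c hc => ?_
  obtain ⟨d, hcd, hd⟩ := EReal.lt_iff_exists_real_btwn.1 hc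
  have hgap : 0 < d - c := sub_pos.2 (EReal.coe_lt_coe_iff.1 hcd)
  refine le_liminf_of_le (by isBoundedDefault) ?_
  filter_upwards [eventually_lt_of_lt_liminf hd, h (d - c) hgap] with i hdu huv
  calc (c : EReal) = d - (d - c : ℝ) := by rw [← EReal.coe_sub, sub_sub_cancel]
    _ ≤ v i := EReal.sub_le_of_le_add (hdu.le.trans huv)

theorem eventually_le_add_of_tendsto_toReal_sub {u v : ι → EReal}
    (hu : ∀ᶠ i in l, u i ≠ ⊤) (hv : ∀ᶠ i in l, v i ≠ ⊥)
    (h : Tendsto (fun i => (u i).toReal - (v i).toReal) l (nhds 0)) {ε : ℝ} (hε : 0 < ε) :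
    ∀ᶠ i in l, u i ≤ v i + ε := by
  filter_upwards [hu, hv, h.eventually_lt_const hε] with i hui hvi hlt
  have hreal : (u i).toReal ≤ (v i).toReal + ε := by linarith
  calc u i ≤ (u i).toReal := EReal.le_coe_toReal hui
    _ ≤ (v i).toReal + ε := by exact_mod_cast hreal
    _ ≤ v i + ε := by gcongr; exact EReal.coe_toReal_le hvi

theorem limsup_iInf_le_biInf {X α : Type*} [CompleteLattice α] {Y : Set X} {F : X → α}
    {Fn : ι → X → α} (hY : ∀ y ∈ Y, ∃ ys : ι → X, limsup (fun i => Fn i (ys i)) l ≤ F y) :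
    limsup (fun i => ⨅ x, Fn i x) l ≤ ⨅ y ∈ Y, F y := by
  refine le_iInf₂ fun y hy => ?_
  obtain ⟨ys, hys⟩ := hY y hy
  exact (limsup_le_limsup (.of_forall fun i => iInf_le (Fn i) (ys i))).trans hys

theorem stmt16_general {X : Type*} {Y : Set X} {F : X → EReal} {Fn : ι → X → EReal} {z : X}
    {zs : ι → X} (hz : F z ≤ liminf (fun i => Fn i (zs i)) l)
    (hY : ∀ y ∈ Y, ∃ ys : ι → X, limsup (fun i => Fn i (ys i)) l ≤ F y)
    (hzs : ∀ ε : ℝ, 0 < ε → ∀ᶠ i in l, Fn i (zs i) ≤ (⨅ x, Fn i x) + ε) :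
    F z ≤ liminf (fun i => ⨅ x, Fn i x) l ∧ limsup (fun i => ⨅ x, Fn i x) l ≤ ⨅ y ∈ Y, F y :=
  ⟨hz.trans (liminf_le_liminf_of_forall_pos_eventually_le_add hzs), limsup_iInf_le_biInf hY⟩

end

theorem stmt16 {X : Type*} [MetricSpace X] (Y : Set X)
    (F : X → EReal) (Fn : ℕ → X → EReal)
    (h1 : ∀ (x : X) (xs : ℕ → X),
      Filter.Tendsto (fun n => dist (xs n) x) Filter.atTop (nhds 0) →
        F x ≤ Filter.liminf (fun n => Fn n (xs n)) Filter.atTop)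
    (h2 : ∀ y ∈ Y, ∃ ys : ℕ → X,
      Filter.Tendsto (fun n => dist (ys n) y) Filter.atTop (nhds 0) ∧
        Filter.limsup (fun n => Fn n (ys n)) Filter.atTop ≤ F y)
    (z : X) (zs : ℕ → X)
    (hz : Filter.Tendsto (fun n => dist (zs n) z) Filter.atTop (nhds 0))
    (hfin1 : ∀ n, Fn n (zs n) ≠ ⊤ ∧ Fn n (zs n) ≠ ⊥)
    (hfin2 : ∀ n, (⨅ x : X, Fn n x) ≠ ⊤ ∧ (⨅ x : X, Fn n x) ≠ ⊥)
    (happ : Filter.Tendsto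
      (fun n => |(Fn n (zs n)).toReal - (⨅ x : X, Fn n x).toReal|)
      Filter.atTop (nhds 0)) :
    F z ≤ Filter.liminf (fun n => ⨅ x : X, Fn n x) Filter.atTop ∧
      Filter.liminf (fun n => ⨅ x : X, Fn n x) Filter.atTop ≤ ⨅ y ∈ Y, F y := by
  have hzs (ε : ℝ) (hε : 0 < ε) : ∀ᶠ n in atTop, Fn n (zs n) ≤ (⨅ x, Fn n x) + ε :=
    eventually_le_add_of_tendsto_toReal_sub (.of_forall fun n => (hfin1 n).1)
      (.of_forall fun n => (hfin2 n).2) ((tendsto_zero_iff_abs_tendsto_zero _).2 happ) hε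
  exact (stmt16_general (h1 z zs hz) (fun y hy => (h2 y hy).imp fun _ => And.right) hzs).imp_right
    (le_trans liminf_le_limsup)
end
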